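/- arXiv:1210.1853 — 2 statements merged into one kernel-verified Lean document; each statement's English description precedes it below -/
import Mathlib

section
/- Ultraspherical interpolation inequality, supercritical range: let d ≥ 1 and let p satisfy 2 < p ≤ 2d/(d−2) if d ≥ 3, or 2 < p < ∞ if d = 1 or d = 2. Then for every continuously differentiable function f on [−1,1], ∫_{−1}^{1} |f'(x)|² ν(x) dν_d(x) ≥ d ( ‖f‖_p² − ‖f‖_2² ) / (p − 2), where ‖f‖_q = ( ∫_{−1}^{1} |f|^q dν_d )^{1/q}. -/
open MeasureTheory Real

noncomputable section

/-- The normalization constant `Z_d = √π Γ(d/2)/Γ((d+1)/2)`. -/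
def Zd (d : ℕ) : ℝ := Real.sqrt π * Real.Gamma ((d : ℝ) / 2) / Real.Gamma (((d : ℝ) + 1) / 2)

/-- The probability measure `dν_d(x) = Z_d⁻¹ (1 − x²)^{d/2−1} dx` on `(−1,1)`. -/
def nuMeas (d : ℕ) : Measure ℝ :=
  (volume.restrict (Set.Ioo (-1 : ℝ) 1)).withDensity
    fun x => ENNReal.ofReal ((1 - x ^ 2) ^ ((d : ℝ) / 2 - 1) / Zd d)

/-!
Write `w = (1 - x²) ^ (d / 2 - 1)` and `ρ = (1 - x²) w`. On `[-a, a]` with `a < 1` the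
Sturm–Liouville problem with coefficients `ρ`, `w` is regular, so for `l > 0` the best constant
`J` in `J (∫ |u| ^ p w) ^ (2 / p) ≤ ∫ ρ u' ^ 2 + l ∫ u ^ 2 w` is attained, at a positive solution
of `-(ρ u')' + l u w = J u ^ (p - 1) w` with Neumann boundary conditions. A Bakry–Émery type
quantity built from `u` and `u'` vanishes at both ends and, as long as `l (p - 2) < d`, has a
derivative bounded below by a positive multiple of `u' ^ 2`: the other terms are squares, whose
coefficients are nonnegative exactly when `p (d - 2) ≤ 2 d`. Hence `u' = 0`, and `J` is the value
for constants. The inequality on `(-1, 1)` follows with `l = a d / (p - 2)` and `a → 1`.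
-/

namespace Ultraspherical

open Set Filter Topology

section Calculus

variable {A B : ℝ}

lemma exists_subseq_tendstoUniformly_of_equicontinuous {X E : Type*} [TopologicalSpace X]
    [CompactSpace X] [MetricSpace E] {K : Set E} (hK : IsCompact K) {f : ℕ → X → E}
    (hf : Equicontinuous f) (hfK : ∀ n x, f n x ∈ K) :
    ∃ φ : ℕ → ℕ, StrictMono φ ∧ ∃ F, Continuous F ∧
      TendstoUniformly (fun n => f (φ n)) F atTop := by
  let g : ℕ → BoundedContinuousFunction X E := fun n =>
    BoundedContinuousFunction.mkOfCompact ⟨f n, hf.continuous n⟩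
  have hcompact : IsCompact (closure (range g)) := by
    refine BoundedContinuousFunction.arzela_ascoli K hK _ ?_ ?_
    · rintro _ x ⟨n, rfl⟩
      exact hfK n x
    · rw [equicontinuous_iff_range] at hf
      intro x U hU
      filter_upwards [hf x U hU] with y hy
      rintro ⟨_, n, rfl⟩
      exact hy ⟨f n, n, rfl⟩
  obtain ⟨F, -, φ, hφ, hF⟩ := hcompact.tendsto_subseq fun n => subset_closure ⟨n, rfl⟩
  exact ⟨φ, hφ, F, F.continuous,
    BoundedContinuousFunction.tendsto_iff_tendstoUniformly.1 hF⟩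

lemma tendsto_intervalIntegral_comp_of_bounded (hAB : A ≤ B) {M : ℝ} {Ψ : ℝ → ℝ → ℝ}
    (hΨ : Continuous fun z : ℝ × ℝ => Ψ z.1 z.2) {f : ℕ → ℝ → ℝ} {F : ℝ → ℝ}
    (hf : ∀ n, Continuous (f n)) (hM : ∀ n, ∀ x ∈ Icc A B, |f n x| ≤ M)
    (hlim : ∀ x ∈ Icc A B, Tendsto (fun n => f n x) atTop (𝓝 (F x))) :
    Tendsto (fun n => ∫ x in A..B, Ψ x (f n x)) atTop (𝓝 (∫ x in A..B, Ψ x (F x))) := by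
  obtain ⟨K, hK⟩ := (isCompact_Icc (a := A) (b := B)).prod (isCompact_Icc (a := -M) (b := M))
    |>.exists_bound_of_continuousOn hΨ.continuousOn
  have hIcc : ∀ {x}, x ∈ uIoc A B → x ∈ Icc A B := fun hx =>
    Ioc_subset_Icc_self (uIoc_of_le hAB ▸ hx)
  refine intervalIntegral.tendsto_integral_filter_of_dominated_convergence (fun _ => K)
    (.of_forall fun n => ?_) (.of_forall fun n => .of_forall fun x hx => ?_)
    intervalIntegrable_const (.of_forall fun x hx => ?_)
  · exact (hΨ.comp (continuous_id.prodMk (hf n))).aestronglyMeasurable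
  · exact hK (x, f n x) ⟨hIcc hx, abs_le.1 (hM n x (hIcc hx))⟩
  · exact (hΨ.tendsto (x, F x)).comp (tendsto_const_nhds.prodMk_nhds (hlim x (hIcc hx)))

lemma sq_intervalIntegral_le (hAB : A ≤ B) {g : ℝ → ℝ} (hg : Continuous g) :
    (∫ x in A..B, g x) ^ 2 ≤ (B - A) * ∫ x in A..B, g x ^ 2 := by
  rcases hAB.eq_or_lt with rfl | hlt
  · simp
  set m := ∫ x in A..B, g x
  have hnonneg : 0 ≤ ∫ x in A..B, ((B - A) * g x - m) ^ 2 :=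
    intervalIntegral.integral_nonneg hAB fun x _ => sq_nonneg _
  have hexpand : ∫ x in A..B, ((B - A) * g x - m) ^ 2 =
      (B - A) * ((B - A) * (∫ x in A..B, g x ^ 2) - m ^ 2) := by
    have hi : ∀ {h : ℝ → ℝ}, Continuous h → IntervalIntegrable h volume A B := fun h =>
      h.intervalIntegrable _ _
    calc ∫ x in A..B, ((B - A) * g x - m) ^ 2
        = ∫ x in A..B, ((B - A) ^ 2 * g x ^ 2 - 2 * (B - A) * m * g x + m ^ 2) := by
          congr 1; ext x; ring
      _ = (B - A) ^ 2 * (∫ x in A..B, g x ^ 2) - 2 * (B - A) * m * m + (B - A) * m ^ 2 := by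
          rw [intervalIntegral.integral_add (hi (by fun_prop)) (hi (by fun_prop)),
            intervalIntegral.integral_sub (hi (by fun_prop)) (hi (by fun_prop)),
            intervalIntegral.integral_const_mul, intervalIntegral.integral_const_mul,
            intervalIntegral.integral_const, smul_eq_mul]
      _ = _ := by ring
  rw [hexpand] at hnonneg
  linarith [nonneg_of_mul_nonneg_right hnonneg (sub_pos.2 hlt)]

lemma sq_sub_le_abs_sub_mul_integral_sq_deriv {f : ℝ → ℝ} (hf : ContDiff ℝ 1 f) {x y : ℝ}
    (hx : x ∈ Icc A B) (hy : y ∈ Icc A B) :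
    (f x - f y) ^ 2 ≤ |x - y| * ∫ t in A..B, deriv f t ^ 2 := by
  wlog hxy : x ≤ y generalizing x y
  · rw [abs_sub_comm, ← neg_sub (f y), neg_sq]
    exact this hy hx (le_of_not_ge hxy)
  have hdf : Continuous (deriv f) := hf.continuous_deriv le_rfl
  calc (f x - f y) ^ 2 = (∫ t in x..y, deriv f t) ^ 2 := by
        rw [intervalIntegral.integral_deriv_eq_sub
          (fun t _ => hf.differentiable one_ne_zero t) (hdf.intervalIntegrable _ _)]
        ring
    _ ≤ (y - x) * ∫ t in x..y, deriv f t ^ 2 := sq_intervalIntegral_le hxy hdf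
    _ ≤ |x - y| * ∫ t in A..B, deriv f t ^ 2 := by
        rw [abs_sub_comm, abs_of_nonneg (sub_nonneg.2 hxy)]
        gcongr
        exact intervalIntegral.integral_mono_interval hx.1 hxy hy.2
          (.of_forall fun t => sq_nonneg _) ((hdf.pow 2).intervalIntegrable _ _)

lemma rpow_add_mul_rpow_le_abs_add_rpow {p F : ℝ} (hp : 1 < p) (hF : 0 ≤ F) (h : ℝ) :
    F ^ p + p * F ^ (p - 1) * h ≤ |F + h| ^ p := by
  rcases hF.eq_or_lt with rfl | hF
  · rw [zero_rpow (by linarith), zero_rpow (by linarith)]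
    simpa using rpow_nonneg (abs_nonneg h) p
  rw [rpow_sub_one hF.ne']
  by_cases hs : -1 ≤ h / F
  · have hnonneg : 0 ≤ 1 + h / F := by linarith
    calc F ^ p + p * (F ^ p / F) * h = F ^ p * (1 + p * (h / F)) := by field_simp
      _ ≤ F ^ p * (1 + h / F) ^ p := by
          gcongr
          exact one_add_mul_self_le_rpow_one_add hs hp.le
      _ = |F + h| ^ p := by
          rw [← mul_rpow hF.le hnonneg, ← abs_of_nonneg (mul_nonneg hF.le hnonneg)]
          congr 2
          field_simp
  · calc F ^ p + p * (F ^ p / F) * h = F ^ p * (1 + p * (h / F)) := by field_simp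
      _ ≤ 0 := mul_nonpos_of_nonneg_of_nonpos (by positivity) (by nlinarith)
      _ ≤ |F + h| ^ p := by positivity

lemma deriv_eq_of_le_quadratic {φ : ℝ → ℝ} {φ' b c : ℝ} (hφ : HasDerivAt φ φ' 0)
    (hle : ∀ᶠ t in 𝓝 0, φ t ≤ φ 0 + t * b + t ^ 2 * c) : φ' = b := by
  have hderiv : HasDerivAt (fun t => φ t - (t * b + t ^ 2 * c)) (φ' - b) 0 := by
    refine (hφ.sub (((hasDerivAt_id 0).mul_const b).add
      (((hasDerivAt_id 0).pow 2).mul_const c))).congr_deriv ?_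
    simp
  have hmax : IsLocalMax (fun t => φ t - (t * b + t ^ 2 * c)) 0 := by
    filter_upwards [hle] with t ht
    linarith
  exact sub_eq_zero.1 (hmax.hasDerivAt_eq_zero hderiv)

lemma eq_zero_of_hasDerivAt_nonneg_of_eq {P P' : ℝ → ℝ} {a b : ℝ}
    (hcont : ContinuousOn P (Icc a b)) (hP : ∀ x ∈ Ioo a b, HasDerivAt P (P' x) x)
    (hnonneg : ∀ x ∈ Ioo a b, 0 ≤ P' x) (hab : P a = P b) : ∀ x ∈ Ioo a b, P' x = 0 := by
  have hmono : MonotoneOn P (Icc a b) :=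
    monotoneOn_of_hasDerivWithinAt_nonneg (f' := P') (convex_Icc _ _) hcont
      (fun x hx => (hP x (by simpa using hx)).hasDerivWithinAt)
      fun x hx => hnonneg x (by simpa using hx)
  intro x hx
  have hconst : P =ᶠ[𝓝 x] fun _ => P a :=
    eventually_of_mem (Icc_mem_nhds hx.1 hx.2) fun y hy =>
      le_antisymm ((hmono hy (right_mem_Icc.2 (hy.1.trans hy.2)) hy.2).trans_eq hab.symm)
        (hmono (left_mem_Icc.2 (hy.1.trans hy.2)) hy hy.1)
  exact ((hP x hx).congr_of_eventuallyEq hconst.symm).unique (hasDerivAt_const x (P a))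

lemma eq_zero_of_norm_deriv_le_mul_norm {E : Type*} [NormedAddCommGroup E] [NormedSpace ℝ E]
    {y y' : ℝ → E} {K x₀ : ℝ} (hy : ∀ x ∈ Icc A B, HasDerivAt y (y' x) x)
    (hbound : ∀ x ∈ Icc A B, ‖y' x‖ ≤ K * ‖y x‖) (hx₀ : x₀ ∈ Icc A B) (hzero : y x₀ = 0)
    {x : ℝ} (hx : x ∈ Icc A B) : y x = 0 := by
  rcases le_total x₀ x with hle | hle
  · have hsub : Icc x₀ x ⊆ Icc A B := Icc_subset_Icc hx₀.1 hx.2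
    exact eq_zero_of_abs_deriv_le_mul_abs_self_of_eq_zero_right
      (fun t ht => (hy t (hsub ht)).continuousAt.continuousWithinAt)
      (fun t ht => (hy t (hsub (Ico_subset_Icc_self ht))).hasDerivWithinAt) hzero
      (fun t ht => hbound t (hsub (Ico_subset_Icc_self ht))) x (right_mem_Icc.2 hle)
  · have hsub : ∀ t ∈ Icc (-x₀) (-x), -t ∈ Icc A B := fun t ht =>
      ⟨hx.1.trans (le_neg.1 ht.2), (neg_le.1 ht.1).trans hx₀.2⟩
    have hyneg : ∀ t ∈ Icc (-x₀) (-x), HasDerivAt (fun t => y (-t)) (-y' (-t)) t := fun t ht => by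
      simpa [Function.comp_def] using (hy (-t) (hsub t ht)).scomp t (hasDerivAt_neg t)
    simpa using eq_zero_of_abs_deriv_le_mul_abs_self_of_eq_zero_right
      (fun t ht => (hyneg t ht).continuousAt.continuousWithinAt)
      (fun t ht => (hyneg t (Ico_subset_Icc_self ht)).hasDerivWithinAt) (by simpa using hzero)
      (fun t ht => by simpa using hbound (-t) (hsub t (Ico_subset_Icc_self ht))) (-x)
      (right_mem_Icc.2 (neg_le_neg hle))

lemma exists_contDiff_eqOn_Icc {f : ℝ → ℝ} (hAB : A < B) (hf : ContDiffOn ℝ 1 f (Icc A B)) :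
    ∃ g, ContDiff ℝ 1 g ∧ EqOn g f (Icc A B) := by
  let e : ℝ → ℝ := IccExtend hAB.le ((Icc A B).domRestrict (derivWithin f (Icc A B)))
  have he : Continuous e := (continuousOn_iff_continuous_domRestrict.1
    (hf.continuousOn_derivWithin (uniqueDiffOn_Icc hAB) le_rfl)).Icc_extend'
  have hg : ∀ x, HasDerivAt (fun x => f A + ∫ t in A..x, e t) (e x) x := fun x =>
    (he.integral_hasStrictDerivAt A x).hasDerivAt.const_add _
  refine ⟨_, contDiff_one_iff_deriv.2 ⟨fun x => (hg x).differentiableAt, ?_⟩, fun x hx => ?_⟩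
  · rwa [funext fun x => (hg x).deriv]
  have hfe : ∀ t ∈ Ioo A x, HasDerivAt f (e t) t := fun t ht => by
    have hnhds : Icc A B ∈ 𝓝 t := Icc_mem_nhds ht.1 (ht.2.trans_le hx.2)
    have het : e t = deriv f t := by
      simp only [e, IccExtend_of_mem _ _ (mem_of_mem_nhds hnhds)]
      exact derivWithin_of_mem_nhds hnhds
    exact het ▸ ((hf.differentiableOn one_ne_zero).differentiableAt hnhds).hasDerivAt
  change f A + ∫ t in A..x, e t = f x
  rw [intervalIntegral.integral_eq_sub_of_hasDerivAt_of_le hx.1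
    (hf.continuousOn.mono (Icc_subset_Icc_right hx.2)) hfe (he.intervalIntegrable _ _)]
  ring

lemma tendsto_intervalIntegral_neg_self {h : ℝ → ℝ} (hh : IntegrableOn h (Ioo (-1) 1)) :
    Tendsto (fun a => ∫ x in -a..a, h x) (𝓝[<] 1) (𝓝 (∫ x in Ioo (-1) 1, h x)) := by
  have hb : Tendsto (fun a : ℝ => a) (𝓝[<] 1) (𝓝 1) := tendsto_id.mono_left nhdsWithin_le_nhds
  refine ((aecover_Ioo_of_Ioc (μ := volume) hb.neg hb).integral_tendsto_of_countably_generated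
    hh).congr' ?_
  filter_upwards [Ioo_mem_nhdsLT zero_lt_one] with a ha
  have hsub : Ioc (-a) a ⊆ Ioo (-1) 1 := fun x hx =>
    ⟨by linarith [hx.1, ha.2], hx.2.trans_lt ha.2⟩
  rw [intervalIntegral.integral_of_le (by linarith [ha.1]),
    Measure.restrict_restrict measurableSet_Ioc, inter_eq_left.2 hsub]

lemma exists_forall_eq_const_of_integral_mul_eq_zero (hAB : A < B) {G : ℝ → ℝ} (hG : Continuous G)
    (horth : ∀ θ : ℝ → ℝ, Continuous θ → ∫ x in A..B, θ x = 0 → ∫ x in A..B, G x * θ x = 0) :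
    ∃ c, ∀ x ∈ Icc A B, G x = c := by
  set c := (∫ x in A..B, G x) / (B - A)
  have hmean : ∫ x in A..B, (G x - c) = 0 := by
    rw [intervalIntegral.integral_sub (hG.intervalIntegrable _ _) intervalIntegrable_const,
      intervalIntegral.integral_const, smul_eq_mul, mul_div_cancel₀ _ (sub_pos.2 hAB).ne', sub_self]
  have hsq : ∫ x in A..B, (G x - c) ^ 2 = 0 := by
    have horth' := horth (fun x => G x - c) (by fun_prop) hmean
    calc ∫ x in A..B, (G x - c) ^ 2
        = ∫ x in A..B, (G x * (G x - c) - c * (G x - c)) := by congr 1; ext x; ring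
      _ = 0 := by
          rw [intervalIntegral.integral_sub (Continuous.intervalIntegrable (by fun_prop) _ _)
            (Continuous.intervalIntegrable (by fun_prop) _ _), intervalIntegral.integral_const_mul,
            hmean, horth', mul_zero, sub_zero]
  refine ⟨c, fun x hx => ?_⟩
  by_contra hne
  exact hsq.not_gt (intervalIntegral.integral_pos hAB (by fun_prop) (fun t _ => sq_nonneg _)
    ⟨x, hx, sq_pos_of_ne_zero (sub_ne_zero.2 hne)⟩)

end Calculus

/-- A regular Sturm–Liouville problem on `[A, B]`: the diffusion coefficient `ρ` and the weight `w`
are continuous and positive. They are total functions, to be thought of as extended from `[A, B]`,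
so that solutions extend beyond the end points and have two-sided derivatives there. -/
structure SturmLiouville where
  (A B : ℝ)
  (ρ w : ℝ → ℝ)
  lt : A < B
  continuous_ρ : Continuous ρ
  continuous_w : Continuous w
  ρ_pos : ∀ x, 0 < ρ x
  w_pos : ∀ x, 0 < w x

namespace SturmLiouville

variable (S : SturmLiouville) {u H k φ Φ θ f : ℝ → ℝ} {l p : ℝ}

section Neumann

/-- `u` solves the Neumann problem `(ρ u')' = k`, `u'(A) = u'(B) = 0`, with flux `H = ρ u'`. -/
structure IsNeumannSolution (u H k : ℝ → ℝ) : Prop where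
  continuous_rhs : Continuous k
  hasDerivAt : ∀ x, HasDerivAt u (H x / S.ρ x) x
  hasDerivAt_flux : ∀ x, HasDerivAt H (k x) x
  flux_left : H S.A = 0
  flux_right : H S.B = 0

variable {S}

lemma IsNeumannSolution.continuous_flux (h : S.IsNeumannSolution u H k) : Continuous H :=
  continuous_iff_continuousAt.2 fun x => (h.hasDerivAt_flux x).continuousAt

lemma IsNeumannSolution.contDiff (h : S.IsNeumannSolution u H k) : ContDiff ℝ 1 u := by
  refine contDiff_one_iff_deriv.2 ⟨fun x => (h.hasDerivAt x).differentiableAt, ?_⟩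
  rw [funext fun x => (h.hasDerivAt x).deriv]
  exact h.continuous_flux.div S.continuous_ρ fun x => (S.ρ_pos x).ne'

lemma isNeumannSolution_const (c : ℝ) : S.IsNeumannSolution (fun _ => c) 0 0 where
  continuous_rhs := continuous_zero
  hasDerivAt x := by simpa using hasDerivAt_const x c
  hasDerivAt_flux x := hasDerivAt_const x 0
  flux_left := rfl
  flux_right := rfl

lemma IsNeumannSolution.add_const (h : S.IsNeumannSolution u H k) (c : ℝ) :
    S.IsNeumannSolution (fun x => u x + c) H k :=
  { h with hasDerivAt := fun x => (h.hasDerivAt x).add_const c }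

lemma exists_isNeumannSolution (hk : Continuous k) (hmean : ∫ x in S.A..S.B, k x = 0) :
    ∃ u H, S.IsNeumannSolution u H k := by
  have hH : ∀ x, HasDerivAt (fun x => ∫ t in S.A..x, k t) (k x) x := fun x =>
    (hk.integral_hasStrictDerivAt S.A x).hasDerivAt
  have hcont : Continuous fun x => (∫ t in S.A..x, k t) / S.ρ x :=
    (continuous_iff_continuousAt.2 fun x => (hH x).continuousAt).div S.continuous_ρ
      fun x => (S.ρ_pos x).ne'
  exact ⟨_, _, hk, fun x => (hcont.integral_hasStrictDerivAt S.A x).hasDerivAt, hH,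
    intervalIntegral.integral_same, hmean⟩

lemma IsNeumannSolution.integral_mul (hφ : S.IsNeumannSolution φ Φ θ) (hf : ContDiff ℝ 1 f) :
    ∫ x in S.A..S.B, f x * θ x = -∫ x in S.A..S.B, S.ρ x * (deriv f x * deriv φ x) := by
  have hflux : ∀ x, S.ρ x * (deriv f x * deriv φ x) = deriv f x * Φ x := fun x => by
    rw [(hφ.hasDerivAt x).deriv]
    field_simp [(S.ρ_pos x).ne']
  simp only [hflux]
  rw [intervalIntegral.integral_mul_deriv_eq_deriv_mul
    (fun x _ => (hf.differentiable one_ne_zero x).hasDerivAt) (fun x _ => hφ.hasDerivAt_flux x)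
    ((hf.continuous_deriv le_rfl).intervalIntegrable _ _)
    (hφ.continuous_rhs.intervalIntegrable _ _), hφ.flux_left, hφ.flux_right]
  simp

lemma IsNeumannSolution.integral_mul_comm (hu : S.IsNeumannSolution u H k)
    (hφ : S.IsNeumannSolution φ Φ θ) :
    ∫ x in S.A..S.B, u x * θ x = ∫ x in S.A..S.B, φ x * k x := by
  rw [hφ.integral_mul hu.contDiff, hu.integral_mul hφ.contDiff]
  simp only [mul_comm (deriv u _)]

lemma exists_isNeumannSolution_eqOn_of_weak {F : ℝ → ℝ} (hF : Continuous F) (hk : Continuous k)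
    (hweak : ∀ φ Φ θ, S.IsNeumannSolution φ Φ θ →
      ∫ x in S.A..S.B, F x * θ x = ∫ x in S.A..S.B, φ x * k x) :
    ∃ u H, S.IsNeumannSolution u H k ∧ EqOn u F (Icc S.A S.B) := by
  obtain ⟨v, H, hv⟩ := S.exists_isNeumannSolution hk
    (by simpa using (hweak _ _ _ (isNeumannSolution_const 1)).symm)
  have hv' : Continuous v := hv.contDiff.continuous
  have horth : ∀ θ, Continuous θ → ∫ x in S.A..S.B, θ x = 0 →
      ∫ x in S.A..S.B, (F x - v x) * θ x = 0 := fun θ hθ hmean => by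
    obtain ⟨φ, Φ, hφ⟩ := S.exists_isNeumannSolution hθ hmean
    simp only [sub_mul]
    rw [intervalIntegral.integral_sub (Continuous.intervalIntegrable (by fun_prop) _ _)
      (Continuous.intervalIntegrable (by fun_prop) _ _), hweak φ Φ θ hφ,
      hv.integral_mul_comm hφ, sub_self]
  obtain ⟨c, hc⟩ := exists_forall_eq_const_of_integral_mul_eq_zero S.lt
    (by fun_prop : Continuous fun x => F x - v x) horth
  exact ⟨_, H, hv.add_const c, fun x hx => by linarith [hc x hx]⟩

lemma IsNeumannSolution.pos_of_nonneg (hu : S.IsNeumannSolution u H k)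
    (hnonneg : ∀ x ∈ Icc S.A S.B, 0 ≤ u x) {K : ℝ} (hk : ∀ x ∈ Icc S.A S.B, |k x| ≤ K * |u x|)
    (hne : ∃ x ∈ Icc S.A S.B, u x ≠ 0) : ∀ x ∈ Icc S.A S.B, 0 < u x := by
  by_contra! hzero
  obtain ⟨x₀, hx₀, hux₀⟩ := hzero
  replace hux₀ : u x₀ = 0 := hux₀.antisymm (hnonneg x₀ hx₀)
  have hHx₀ : H x₀ = 0 := by
    rcases eq_endpoints_or_mem_Ioo_of_mem_Icc hx₀ with rfl | rfl | hx₀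
    · exact hu.flux_left
    · exact hu.flux_right
    · have hmin : IsLocalMin u x₀ := by
        filter_upwards [Icc_mem_nhds hx₀.1 hx₀.2] with x hx
        exact hux₀ ▸ hnonneg x hx
      simpa [(S.ρ_pos x₀).ne'] using hmin.hasDerivAt_eq_zero (hu.hasDerivAt x₀)
  obtain ⟨R, hR⟩ := isCompact_Icc.exists_bound_of_continuousOn
    (S.continuous_ρ.inv₀ fun x => (S.ρ_pos x).ne').continuousOn (s := Icc S.A S.B)
  have hbound : ∀ x ∈ Icc S.A S.B, ‖(H x / S.ρ x, k x)‖ ≤ max R K * ‖(u x, H x)‖ := fun x hx => by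
    have hR' : |(S.ρ x)⁻¹| ≤ R := hR x hx
    have hle : 0 ≤ max R K := ((abs_nonneg _).trans hR').trans (le_max_left R K)
    simp only [Prod.norm_mk, norm_eq_abs, div_eq_mul_inv, abs_mul]
    refine max_le ?_ ((hk x hx).trans (by gcongr; exacts [le_max_right .., le_max_left ..]))
    rw [mul_comm]
    gcongr
    exacts [hR'.trans (le_max_left ..), le_max_right ..]
  obtain ⟨x, hx, hux⟩ := hne
  exact hux (congrArg Prod.fst (eq_zero_of_norm_deriv_le_mul_norm
    (fun x _ => (hu.hasDerivAt x).prodMk (hu.hasDerivAt_flux x)) hbound hx₀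
    (by simp [hux₀, hHx₀]) hx))

end Neumann

section Energy

/-- The Dirichlet form plus `l` times the weighted square norm, `∫ ρ f'² + l ∫ f² w`. -/
def energy (l : ℝ) (f : ℝ → ℝ) : ℝ :=
  (∫ x in S.A..S.B, S.ρ x * deriv f x ^ 2) + l * ∫ x in S.A..S.B, f x ^ 2 * S.w x

/-- The `p`-th power of the weighted `L^p` norm. -/
def mass (p : ℝ) (f : ℝ → ℝ) : ℝ := ∫ x in S.A..S.B, |f x| ^ p * S.w x

/-- The optimal constant `I` in `I ‖f‖_p² ≤ energy f`, as the infimum of the energy over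
`‖f‖_p ≥ 1`; the inequality in the constraint makes the admissible set stable under increasing
`|f|`. -/
def bestConst (l p : ℝ) : ℝ := sInf (S.energy l '' {f | ContDiff ℝ 1 f ∧ 1 ≤ S.mass p f})

lemma integral_w_pos : 0 < ∫ x in S.A..S.B, S.w x :=
  intervalIntegral.intervalIntegral_pos_of_pos (S.continuous_w.intervalIntegrable _ _) S.w_pos S.lt

lemma energy_nonneg (hl : 0 ≤ l) (f : ℝ → ℝ) : 0 ≤ S.energy l f :=
  add_nonneg
    (intervalIntegral.integral_nonneg S.lt.le fun x _ => mul_nonneg (S.ρ_pos x).le (sq_nonneg _))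
    (mul_nonneg hl (intervalIntegral.integral_nonneg S.lt.le
      fun x _ => mul_nonneg (sq_nonneg _) (S.w_pos x).le))

lemma energy_const (l c : ℝ) : S.energy l (fun _ => c) = l * c ^ 2 * ∫ x in S.A..S.B, S.w x := by
  simp [energy, mul_assoc]

lemma energy_const_mul (l c : ℝ) (f : ℝ → ℝ) :
    S.energy l (fun x => c * f x) = c ^ 2 * S.energy l f := by
  have hderiv : ∀ x, S.ρ x * deriv (fun x => c * f x) x ^ 2 = c ^ 2 * (S.ρ x * deriv f x ^ 2) :=
    fun x => by rw [deriv_const_mul_field]; ring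
  have hsq : ∀ x, (c * f x) ^ 2 * S.w x = c ^ 2 * (f x ^ 2 * S.w x) := fun x => by ring
  simp only [energy, hderiv, hsq, intervalIntegral.integral_const_mul]
  ring

lemma mass_nonneg (p : ℝ) (f : ℝ → ℝ) : 0 ≤ S.mass p f :=
  intervalIntegral.integral_nonneg S.lt.le
    fun x _ => mul_nonneg (rpow_nonneg (abs_nonneg _) _) (S.w_pos x).le

lemma mass_const (p c : ℝ) : S.mass p (fun _ => c) = |c| ^ p * ∫ x in S.A..S.B, S.w x := by
  simp [mass]

lemma mass_const_mul (p c : ℝ) (f : ℝ → ℝ) :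
    S.mass p (fun x => c * f x) = |c| ^ p * S.mass p f := by
  simp only [mass, abs_mul, mul_rpow (abs_nonneg _) (abs_nonneg _), mul_assoc,
    intervalIntegral.integral_const_mul]

lemma mass_le_mass (hp : 0 ≤ p) {g : ℝ → ℝ} (hf : Continuous f) (hg : Continuous g)
    (hfg : ∀ x, |f x| ≤ |g x|) : S.mass p f ≤ S.mass p g := by
  have hintegrable : ∀ {h : ℝ → ℝ}, Continuous h →
      IntervalIntegrable (fun x => |h x| ^ p * S.w x) volume S.A S.B := fun hh =>
    ((hh.abs.rpow_const fun _ => Or.inr hp).mul S.continuous_w).intervalIntegrable _ _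
  refine intervalIntegral.integral_mono S.lt.le (hintegrable hf) (hintegrable hg) fun x =>
    mul_le_mul_of_nonneg_right (rpow_le_rpow (abs_nonneg _) (hfg x) hp) (S.w_pos x).le

lemma exists_const_mul_mass_eq_one (hp : 0 < p) (hf : 0 < S.mass p f) :
    ∃ c, c ^ 2 * S.mass p f ^ (2 / p) = 1 ∧ S.mass p (fun x => c * f x) = 1 := by
  refine ⟨S.mass p f ^ (-(1 / p)), ?_, ?_⟩
  · rw [← rpow_natCast, ← rpow_mul hf.le, ← rpow_add hf,
      show -(1 / p) * (2 : ℕ) + 2 / p = 0 by push_cast; ring, rpow_zero]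
  · rw [mass_const_mul, abs_of_pos (by positivity), ← rpow_mul hf.le, ← rpow_add_one hf.ne',
      show -(1 / p) * p + 1 = 0 by field_simp; ring, rpow_zero]

lemma admissible_nonempty (hp : 0 < p) : {f | ContDiff ℝ 1 f ∧ 1 ≤ S.mass p f}.Nonempty := by
  obtain ⟨c, -, hc⟩ := S.exists_const_mul_mass_eq_one (f := fun _ => 1) hp
    (by simpa [mass_const] using S.integral_w_pos)
  exact ⟨_, contDiff_const, hc.ge⟩

lemma bestConst_le (hl : 0 ≤ l) (hf : ContDiff ℝ 1 f) (hmass : 1 ≤ S.mass p f) :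
    S.bestConst l p ≤ S.energy l f :=
  csInf_le ⟨0, forall_mem_image.2 fun _ _ => S.energy_nonneg hl _⟩ (mem_image_of_mem _ ⟨hf, hmass⟩)

lemma bestConst_nonneg (hl : 0 ≤ l) (hp : 0 < p) : 0 ≤ S.bestConst l p :=
  le_csInf ((S.admissible_nonempty hp).image _) (forall_mem_image.2 fun _ _ => S.energy_nonneg hl _)

lemma bestConst_mul_mass_rpow_le (hl : 0 ≤ l) (hp : 0 < p) (hf : ContDiff ℝ 1 f) :
    S.bestConst l p * S.mass p f ^ (2 / p) ≤ S.energy l f := by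
  rcases (S.mass_nonneg p f).eq_or_lt with hzero | hpos
  · rw [← hzero, zero_rpow (by positivity), mul_zero]
    exact S.energy_nonneg hl f
  · obtain ⟨c, hc, hmass⟩ := S.exists_const_mul_mass_eq_one hp hpos
    have hle := S.bestConst_le hl (contDiff_const.mul hf) hmass.ge
    rw [energy_const_mul] at hle
    calc S.bestConst l p * S.mass p f ^ (2 / p)
        ≤ c ^ 2 * S.energy l f * S.mass p f ^ (2 / p) := by gcongr
      _ = S.energy l f := by linear_combination S.energy l f * hc

/- `√(f² + ε)` replaces the non-differentiable `|f|`. -/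
lemma exists_nonneg_energy_le (hf : ContDiff ℝ 1 f) (l : ℝ) {ε : ℝ} (hε : 0 < ε) :
    ∃ g, ContDiff ℝ 1 g ∧ (∀ x, 0 ≤ g x) ∧ (∀ x, |f x| ≤ g x) ∧
      S.energy l g ≤ S.energy l f + l * (ε * ∫ x in S.A..S.B, S.w x) := by
  have hpos : ∀ x, 0 < f x ^ 2 + ε := fun x => by positivity
  have hg : ContDiff ℝ 1 (fun x => √(f x ^ 2 + ε)) :=
    ((hf.pow 2).add contDiff_const).sqrt fun x => (hpos x).ne'
  have hderiv : ∀ x, deriv (fun x => √(f x ^ 2 + ε)) x ^ 2 ≤ deriv f x ^ 2 := fun x => by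
    have hf' : HasDerivAt f (deriv f x) x := (hf.differentiable one_ne_zero x).hasDerivAt
    rw [((hf'.fun_pow 2).add_const ε |>.sqrt (hpos x).ne').deriv, div_pow, mul_pow 2 (√_),
      sq_sqrt (hpos x).le, div_le_iff₀ (by positivity)]
    simp only [Nat.cast_ofNat, Nat.add_one_sub_one, pow_one]
    nlinarith [mul_nonneg hε.le (sq_nonneg (deriv f x))]
  have hdirichlet : ∫ x in S.A..S.B, S.ρ x * deriv (fun x => √(f x ^ 2 + ε)) x ^ 2 ≤
      ∫ x in S.A..S.B, S.ρ x * deriv f x ^ 2 :=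
    intervalIntegral.integral_mono S.lt.le
      ((S.continuous_ρ.mul ((hg.continuous_deriv le_rfl).pow 2)).intervalIntegrable _ _)
      ((S.continuous_ρ.mul ((hf.continuous_deriv le_rfl).pow 2)).intervalIntegrable _ _)
      fun x => mul_le_mul_of_nonneg_left (hderiv x) (S.ρ_pos x).le
  have hsq : ∫ x in S.A..S.B, √(f x ^ 2 + ε) ^ 2 * S.w x =
      (∫ x in S.A..S.B, f x ^ 2 * S.w x) + ε * ∫ x in S.A..S.B, S.w x := by
    have hw := S.continuous_w
    have hfc := hf.continuous
    simp only [sq_sqrt (hpos _).le, add_mul]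
    rw [intervalIntegral.integral_add (Continuous.intervalIntegrable (by fun_prop) _ _)
      (Continuous.intervalIntegrable (by fun_prop) _ _), intervalIntegral.integral_const_mul]
  refine ⟨_, hg, fun x => sqrt_nonneg _, fun x => le_sqrt_of_sq_le ?_, ?_⟩
  · rw [sq_abs]
    linarith
  · rw [energy, energy, hsq]
    linarith

lemma exists_nonneg_energy_le_bestConst_add (hl : 0 < l) (hp : 0 < p) {δ : ℝ} (hδ : 0 < δ) :
    ∃ g, ContDiff ℝ 1 g ∧ (∀ x, 0 ≤ g x) ∧ 1 ≤ S.mass p g ∧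
      S.energy l g ≤ S.bestConst l p + δ := by
  obtain ⟨_, ⟨f, ⟨hf, hmass⟩, rfl⟩, hlt⟩ := exists_lt_of_csInf_lt
    ((S.admissible_nonempty hp).image (S.energy l)) (lt_add_of_pos_right _ (half_pos hδ))
  have hw := S.integral_w_pos
  obtain ⟨g, hg, hnonneg, hfg, henergy⟩ := S.exists_nonneg_energy_le hf l
    (ε := δ / 2 / (l * ∫ x in S.A..S.B, S.w x)) (by positivity)
  refine ⟨g, hg, hnonneg, hmass.trans (S.mass_le_mass hp.le hf.continuous hg.continuous
    fun x => (hfg x).trans (le_abs_self _)), henergy.trans ?_⟩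
  calc S.energy l f + l * (δ / 2 / (l * ∫ x in S.A..S.B, S.w x) * ∫ x in S.A..S.B, S.w x)
      = S.energy l f + δ / 2 := by field_simp
    _ ≤ S.bestConst l p + δ := by
        rw [bestConst]
        linarith

lemma exists_minimizingSeq (hl : 0 < l) (hp : 0 < p) :
    ∃ f : ℕ → ℝ → ℝ, (∀ n, ContDiff ℝ 1 (f n)) ∧ (∀ n x, 0 ≤ f n x) ∧ (∀ n, 1 ≤ S.mass p (f n)) ∧
      (∀ n, S.energy l (f n) ≤ S.bestConst l p + 1) ∧
      Tendsto (fun n => S.energy l (f n)) atTop (𝓝 (S.bestConst l p)) := by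
  choose f hf hnonneg hmass henergy using fun n : ℕ =>
    S.exists_nonneg_energy_le_bestConst_add hl hp (Nat.one_div_pos_of_nat (α := ℝ) (n := n))
  refine ⟨f, hf, hnonneg, hmass, fun n => (henergy n).trans ?_,
    tendsto_of_tendsto_of_tendsto_of_le_of_le tendsto_const_nhds ?_
      (fun n => S.bestConst_le hl.le (hf n) (hmass n)) henergy⟩
  · gcongr
    exact div_le_one_of_le₀ (by norm_num) (by positivity)
  · simpa using tendsto_one_div_add_atTop_nhds_zero_nat.const_add (S.bestConst l p)

lemma exists_sq_sub_le_energy (hl : 0 ≤ l) : ∃ C, 0 ≤ C ∧ ∀ f, ContDiff ℝ 1 f →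
    ∀ x ∈ Icc S.A S.B, ∀ y ∈ Icc S.A S.B, (f x - f y) ^ 2 ≤ C * S.energy l f * |x - y| := by
  obtain ⟨x₀, -, hmin⟩ := isCompact_Icc.exists_isMinOn (nonempty_Icc.2 S.lt.le)
    S.continuous_ρ.continuousOn
  have hρ₀ := S.ρ_pos x₀
  refine ⟨(S.ρ x₀)⁻¹, by positivity, fun f hf x hx y hy =>
    (sq_sub_le_abs_sub_mul_integral_sq_deriv hf hx hy).trans ?_⟩
  rw [mul_comm, inv_mul_eq_div]
  gcongr
  have hρ := S.continuous_ρ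
  rw [le_div_iff₀' hρ₀]
  calc S.ρ x₀ * ∫ t in S.A..S.B, deriv f t ^ 2
      ≤ ∫ t in S.A..S.B, S.ρ t * deriv f t ^ 2 := by
        rw [← intervalIntegral.integral_const_mul]
        refine intervalIntegral.integral_mono_on S.lt.le
          (Continuous.intervalIntegrable (by fun_prop) _ _)
          (Continuous.intervalIntegrable (by fun_prop) _ _) fun t ht => ?_
        gcongr
        exact hmin ht
    _ ≤ S.energy l f := le_add_of_nonneg_right (mul_nonneg hl
        (intervalIntegral.integral_nonneg S.lt.le
          fun t _ => mul_nonneg (sq_nonneg _) (S.w_pos t).le))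

lemma exists_sq_le_energy (hl : 0 < l) : ∃ C, 0 ≤ C ∧ ∀ f, ContDiff ℝ 1 f →
    ∀ x ∈ Icc S.A S.B, f x ^ 2 ≤ C * S.energy l f := by
  obtain ⟨C, hC, hsub⟩ := S.exists_sq_sub_le_energy hl.le
  set m := ∫ x in S.A..S.B, S.w x with hm
  have hmpos : 0 < m := S.integral_w_pos
  have hw := S.continuous_w
  have hlength : 0 < S.B - S.A := sub_pos.2 S.lt
  refine ⟨2 * (1 / (l * m) + C * (S.B - S.A)), by positivity, fun f hf x hx => ?_⟩
  have hfc := hf.continuous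
  have hE := S.energy_nonneg hl.le f
  have hpointwise : ∀ y ∈ Icc S.A S.B,
      f x ^ 2 * S.w y ≤ 2 * (f y ^ 2 * S.w y) + 2 * (C * (S.B - S.A) * S.energy l f) * S.w y := by
    intro y hy
    have hdist : |x - y| ≤ S.B - S.A := abs_sub_le_iff.2
      ⟨sub_le_sub hx.2 hy.1, sub_le_sub hy.2 hx.1⟩
    have hxy : (f x - f y) ^ 2 ≤ C * S.energy l f * (S.B - S.A) :=
      (hsub f hf x hx y hy).trans (by gcongr)
    nlinarith [S.w_pos y, sq_nonneg (f x - 2 * f y)]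
  have haverage : f x ^ 2 * m ≤ 2 * (∫ y in S.A..S.B, f y ^ 2 * S.w y) +
      2 * (C * (S.B - S.A) * S.energy l f) * m := by
    rw [hm, ← intervalIntegral.integral_const_mul, ← intervalIntegral.integral_const_mul,
      ← intervalIntegral.integral_const_mul, ← intervalIntegral.integral_add]
    · exact intervalIntegral.integral_mono_on S.lt.le
        (Continuous.intervalIntegrable (by fun_prop) _ _)
        (Continuous.intervalIntegrable (by fun_prop) _ _) hpointwise
    all_goals exact Continuous.intervalIntegrable (by fun_prop) _ _
  have hL2 : l * ∫ y in S.A..S.B, f y ^ 2 * S.w y ≤ S.energy l f :=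
    le_add_of_nonneg_left (intervalIntegral.integral_nonneg S.lt.le
      fun t _ => mul_nonneg (S.ρ_pos t).le (sq_nonneg _))
  rw [← mul_le_mul_iff_left₀ (mul_pos hl hmpos)]
  calc f x ^ 2 * (l * m) = l * (f x ^ 2 * m) := by ring
    _ ≤ l * (2 * (∫ y in S.A..S.B, f y ^ 2 * S.w y) +
          2 * (C * (S.B - S.A) * S.energy l f) * m) := by gcongr
    _ ≤ 2 * S.energy l f + l * (2 * (C * (S.B - S.A) * S.energy l f) * m) := by linarith
    _ = 2 * (1 / (l * m) + C * (S.B - S.A)) * S.energy l f * (l * m) := by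
        field_simp

lemma exists_subseq_tendsto_of_energy_le (hl : 0 < l) {f : ℕ → ℝ → ℝ}
    (hf : ∀ n, ContDiff ℝ 1 (f n)) {E : ℝ} (hE : ∀ n, S.energy l (f n) ≤ E) :
    ∃ M, (∀ n, ∀ x ∈ Icc S.A S.B, |f n x| ≤ M) ∧ ∃ φ : ℕ → ℕ, StrictMono φ ∧
      ∃ F, Continuous F ∧ ∀ x ∈ Icc S.A S.B, Tendsto (fun n => f (φ n) x) atTop (𝓝 (F x)) := by
  obtain ⟨C₁, hC₁, hsub⟩ := S.exists_sq_sub_le_energy hl.le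
  obtain ⟨C₂, hC₂, hsq⟩ := S.exists_sq_le_energy hl
  have hM : ∀ n, ∀ x ∈ Icc S.A S.B, |f n x| ≤ √(C₂ * E) := fun n x hx =>
    abs_le_sqrt ((hsq _ (hf n) x hx).trans (mul_le_mul_of_nonneg_left (hE n) hC₂))
  have hmodulus : Tendsto (fun s => √(C₁ * E * s)) (𝓝 0) (𝓝 0) := by
    have hcont : Continuous fun s => √(C₁ * E * s) := by fun_prop
    simpa using hcont.tendsto 0
  have hequi : Equicontinuous fun n (x : Icc S.A S.B) => f n x :=
    Metric.equicontinuous_of_continuity_modulus _ hmodulus _ fun x y n =>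
      abs_le_sqrt ((hsub _ (hf n) x x.2 y y.2).trans
        (mul_le_mul_of_nonneg_right (mul_le_mul_of_nonneg_left (hE n) hC₁) (abs_nonneg _)))
  obtain ⟨φ, hφ, F, hF, hlim⟩ := exists_subseq_tendstoUniformly_of_equicontinuous
    (isCompact_closedBall (0 : ℝ) (√(C₂ * E))) hequi
    fun n x => mem_closedBall_zero_iff.2 (hM n x x.2)
  refine ⟨_, hM, φ, hφ, IccExtend S.lt.le F, hF.Icc_extend', fun x hx => ?_⟩
  rw [IccExtend_of_mem _ _ hx]
  exact hlim.tendsto_at ⟨x, hx⟩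

end Energy

section Minimizer

/-- The bilinear form `∫ ρ f' φ' + l ∫ f φ w` of the energy, where `(ρ φ')' = θ` is a Neumann
problem: integrating by parts gives it a meaning for functions `f` that are merely continuous. -/
def weakForm (l : ℝ) (f φ θ : ℝ → ℝ) : ℝ :=
  -(∫ x in S.A..S.B, f x * θ x) + l * ∫ x in S.A..S.B, f x * φ x * S.w x

/-- A limit of a minimizing sequence for `bestConst`, before any regularity is known: minimality is
recorded along the variations `F + t φ`, with the expansion of the energy in powers of `t` in place
of the energy and with `bestConst` as its constant term. -/
structure IsRelaxedMinimizer (l p : ℝ) (F : ℝ → ℝ) : Prop where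
  continuous : Continuous F
  nonneg : ∀ x, 0 ≤ F x
  one_le_mass : 1 ≤ S.mass p F
  bestConst_le : ∀ φ Φ θ, S.IsNeumannSolution φ Φ θ → ∀ t,
    S.bestConst l p * S.mass p (fun x => F x + t * φ x) ^ (2 / p) ≤
      S.bestConst l p + 2 * t * S.weakForm l F φ θ + t ^ 2 * S.energy l φ

variable {S} {F : ℝ → ℝ}

lemma energy_add_const_mul (l : ℝ) (hf : ContDiff ℝ 1 f) (hφ : S.IsNeumannSolution φ Φ θ) (t : ℝ) :
    S.energy l (fun x => f x + t * φ x) =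
      S.energy l f + 2 * t * S.weakForm l f φ θ + t ^ 2 * S.energy l φ := by
  have hφ' := hφ.contDiff
  have hρ := S.continuous_ρ
  have hw := S.continuous_w
  have hfc := hf.continuous
  have hφc := hφ'.continuous
  have hexpand : ∀ c {a b e : ℝ → ℝ}, Continuous a → Continuous b → Continuous e →
      ∫ x in S.A..S.B, (a x + 2 * c * b x + c ^ 2 * e x) = (∫ x in S.A..S.B, a x) +
        2 * c * (∫ x in S.A..S.B, b x) + c ^ 2 * ∫ x in S.A..S.B, e x := by
    intro c a b e ha hb he
    rw [intervalIntegral.integral_add (Continuous.intervalIntegrable (by fun_prop) _ _)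
      (Continuous.intervalIntegrable (by fun_prop) _ _), intervalIntegral.integral_add
      (ha.intervalIntegrable _ _) (Continuous.intervalIntegrable (by fun_prop) _ _),
      intervalIntegral.integral_const_mul, intervalIntegral.integral_const_mul]
  have hderiv : ∀ x, S.ρ x * deriv (fun x => f x + t * φ x) x ^ 2 = S.ρ x * deriv f x ^ 2 +
      2 * t * (S.ρ x * (deriv f x * deriv φ x)) + t ^ 2 * (S.ρ x * deriv φ x ^ 2) := fun x => by
    rw [((hf.differentiable one_ne_zero x).hasDerivAt.fun_add
      ((hφ'.differentiable one_ne_zero x).hasDerivAt.const_mul t)).deriv]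
    ring
  have hsq : ∀ x, (f x + t * φ x) ^ 2 * S.w x =
      f x ^ 2 * S.w x + 2 * t * (f x * φ x * S.w x) + t ^ 2 * (φ x ^ 2 * S.w x) := fun x => by ring
  simp only [energy, weakForm, hderiv, hsq]
  rw [hexpand t (by fun_prop) (by fun_prop) (by fun_prop), hexpand t (by fun_prop) (by fun_prop)
    (by fun_prop), hφ.integral_mul hf]
  ring

lemma exists_isRelaxedMinimizer (hl : 0 < l) (hp : 0 < p) : ∃ F, S.IsRelaxedMinimizer l p F := by
  obtain ⟨f, hf, hnonneg, hmass, hE, hlimE⟩ := S.exists_minimizingSeq hl hp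
  obtain ⟨M, hM, n, hn, G, hG, hlim⟩ := S.exists_subseq_tendsto_of_energy_le hl hf hE
  have hintegral : ∀ {Ψ : ℝ → ℝ → ℝ}, (Continuous fun z : ℝ × ℝ => Ψ z.1 z.2) →
      Tendsto (fun i => ∫ x in S.A..S.B, Ψ x (f (n i) x)) atTop
        (𝓝 (∫ x in S.A..S.B, Ψ x |G x|)) := fun hΨ =>
    tendsto_intervalIntegral_comp_of_bounded S.lt.le hΨ (fun i => (hf _).continuous)
      (fun i => hM _) fun x hx => by simpa only [abs_of_nonneg (hnonneg _ x)] using (hlim x hx).abs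
  have hmass_lim : ∀ {φ : ℝ → ℝ}, Continuous φ → ∀ t,
      Tendsto (fun i => S.mass p fun x => f (n i) x + t * φ x) atTop
        (𝓝 (S.mass p fun x => |G x| + t * φ x)) := fun {φ} hφ t =>
    hintegral (Ψ := fun x y => |y + t * φ x| ^ p * S.w x)
      ((Continuous.rpow_const (by fun_prop) fun _ => Or.inr hp.le).mul
        (S.continuous_w.comp continuous_fst))
  refine ⟨fun x => |G x|, hG.abs, fun x => abs_nonneg _, ?_, fun φ Φ θ hφ t => ?_⟩
  · have hmass_lim₀ := hmass_lim continuous_zero 0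
    simp only [zero_mul, add_zero] at hmass_lim₀
    exact ge_of_tendsto' hmass_lim₀ fun i => hmass _
  · have hφc := hφ.contDiff.continuous
    have hθc := hφ.continuous_rhs
    have hw := S.continuous_w
    have hweak_lim : Tendsto (fun i => S.weakForm l (f (n i)) φ θ) atTop
        (𝓝 (S.weakForm l (fun x => |G x|) φ θ)) :=
      (hintegral (Ψ := fun x y => y * θ x) (by fun_prop)).neg.add
        ((hintegral (Ψ := fun x y => y * φ x * S.w x) (by fun_prop)).const_mul l)
    refine le_of_tendsto_of_tendsto'
      (((hmass_lim hφc t).rpow_const (Or.inr (by positivity))).const_mul _)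
      (((hlimE.comp hn.tendsto_atTop).add (hweak_lim.const_mul (2 * t))).add_const _) fun i => ?_
    dsimp only [Function.comp_apply]
    rw [← energy_add_const_mul l (hf _) hφ]
    exact S.bestConst_mul_mass_rpow_le hl.le hp
      ((hf _).add (contDiff_const.mul hφ.contDiff))

namespace IsRelaxedMinimizer

lemma mass_add_le (hF : S.IsRelaxedMinimizer l p F) (hp : 1 < p) (hφ : Continuous φ) (t : ℝ) :
    S.mass p F + t * (p * ∫ x in S.A..S.B, F x ^ (p - 1) * φ x * S.w x) ≤
      S.mass p (fun x => F x + t * φ x) := by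
  have hw := S.continuous_w
  have hFc := hF.continuous
  have hpow : ∀ {q : ℝ}, 0 ≤ q → ∀ {g : ℝ → ℝ}, Continuous g → Continuous fun x => g x ^ q :=
    fun hq _ hg => hg.rpow_const fun _ => Or.inr hq
  have hFp : Continuous fun x => |F x| ^ p := hpow (by linarith) hFc.abs
  have hFp' : Continuous fun x => F x ^ (p - 1) := hpow (by linarith) hFc
  have hsum : Continuous fun x => |F x + t * φ x| ^ p := hpow (by linarith) (by fun_prop)
  simp only [mass]
  rw [← intervalIntegral.integral_const_mul, ← intervalIntegral.integral_const_mul,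
    ← intervalIntegral.integral_add (Continuous.intervalIntegrable (by fun_prop) _ _)
      (Continuous.intervalIntegrable (by fun_prop) _ _)]
  refine intervalIntegral.integral_mono S.lt.le (Continuous.intervalIntegrable (by fun_prop) _ _)
    (Continuous.intervalIntegrable (by fun_prop) _ _) fun x => ?_
  have htangent := rpow_add_mul_rpow_le_abs_add_rpow hp (hF.nonneg x) (t * φ x)
  calc |F x| ^ p * S.w x + t * (p * (F x ^ (p - 1) * φ x * S.w x))
      = (F x ^ p + p * F x ^ (p - 1) * (t * φ x)) * S.w x := by
        rw [abs_of_nonneg (hF.nonneg x)]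
        ring
    _ ≤ |F x + t * φ x| ^ p * S.w x := mul_le_mul_of_nonneg_right htangent (S.w_pos x).le

lemma weakForm_eq (hF : S.IsRelaxedMinimizer l p F) (hl : 0 ≤ l) (hp : 1 < p)
    (hφ : S.IsNeumannSolution φ Φ θ) :
    S.weakForm l F φ θ = S.bestConst l p * S.mass p F ^ (2 / p - 1) *
      ∫ x in S.A..S.B, F x ^ (p - 1) * φ x * S.w x := by
  set N := S.mass p F
  set D := ∫ x in S.A..S.B, F x ^ (p - 1) * φ x * S.w x
  have hI : 0 ≤ S.bestConst l p := S.bestConst_nonneg hl (by linarith)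
  have hN : 0 < N := one_pos.trans_le hF.one_le_mass
  have hle : ∀ᶠ t in 𝓝 0, S.bestConst l p * (N + t * (p * D)) ^ (2 / p) ≤
      S.bestConst l p * (N + 0 * (p * D)) ^ (2 / p) + t * (2 * S.weakForm l F φ θ) +
        t ^ 2 * S.energy l φ := by
    have hcont : Continuous fun t => N + t * (p * D) := by fun_prop
    filter_upwards [hcont.continuousAt.eventually (lt_mem_nhds (by simpa using hN))] with t ht
    calc S.bestConst l p * (N + t * (p * D)) ^ (2 / p)
        ≤ S.bestConst l p * S.mass p (fun x => F x + t * φ x) ^ (2 / p) := by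
          gcongr
          exact hF.mass_add_le hp hφ.contDiff.continuous t
      _ ≤ S.bestConst l p * 1 + 2 * t * S.weakForm l F φ θ + t ^ 2 * S.energy l φ := by
          rw [mul_one]
          exact hF.bestConst_le φ Φ θ hφ t
      _ ≤ _ := by
          rw [zero_mul, add_zero, ← mul_assoc t, mul_comm t 2]
          gcongr
          exact one_le_rpow hF.one_le_mass (by positivity)
  have hderiv : HasDerivAt (fun t => S.bestConst l p * (N + t * (p * D)) ^ (2 / p))
      (S.bestConst l p * (p * D * (2 / p) * N ^ (2 / p - 1))) 0 := by
    have hline : HasDerivAt (fun t => N + t * (p * D)) (p * D) 0 := by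
      simpa using ((hasDerivAt_id 0).mul_const (p * D)).const_add N
    simpa using (hline.rpow_const (p := 2 / p) (Or.inl (by simpa using hN.ne'))).const_mul
      (S.bestConst l p)
  linear_combination -1 / 2 * deriv_eq_of_le_quadratic hderiv hle +
    S.bestConst l p * D * N ^ (2 / p - 1) / 2 * mul_div_cancel₀ (2 : ℝ) (by linarith : p ≠ 0)

lemma exists_isNeumannSolution (hF : S.IsRelaxedMinimizer l p F) (hl : 0 ≤ l) (hp : 1 < p) :
    ∃ J u H, S.IsNeumannSolution u H (fun x => (l * F x - J * F x ^ (p - 1)) * S.w x) ∧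
      EqOn u F (Icc S.A S.B) := by
  have hw := S.continuous_w
  have hFc := hF.continuous
  have hFp : Continuous fun x => F x ^ (p - 1) := hFc.rpow_const fun _ => Or.inr (by linarith)
  refine ⟨S.bestConst l p * S.mass p F ^ (2 / p - 1),
    exists_isNeumannSolution_eqOn_of_weak hFc (by fun_prop) fun φ Φ θ hφ => ?_⟩
  set J := S.bestConst l p * S.mass p F ^ (2 / p - 1)
  have hφc := hφ.contDiff.continuous
  have hrhs : ∫ x in S.A..S.B, φ x * ((l * F x - J * F x ^ (p - 1)) * S.w x) =
      l * (∫ x in S.A..S.B, F x * φ x * S.w x) -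
        J * ∫ x in S.A..S.B, F x ^ (p - 1) * φ x * S.w x := by
    rw [← intervalIntegral.integral_const_mul, ← intervalIntegral.integral_const_mul,
      ← intervalIntegral.integral_sub (Continuous.intervalIntegrable (by fun_prop) _ _)
        (Continuous.intervalIntegrable (by fun_prop) _ _)]
    congr 1
    ext x
    ring
  rw [hrhs, ← hF.weakForm_eq hl hp hφ, weakForm]
  ring

lemma mul_integral_w_rpow_le (hF : S.IsRelaxedMinimizer l p F) (hl : 0 ≤ l) (hp : 0 < p) {c : ℝ}
    (hc : ∀ x ∈ Icc S.A S.B, F x = c) :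
    l * (∫ x in S.A..S.B, S.w x) ^ (1 - 2 / p) ≤ S.bestConst l p := by
  set m := ∫ x in S.A..S.B, S.w x with hm
  have hmpos : 0 < m := S.integral_w_pos
  have hcongr : ∀ {f g : ℝ → ℝ}, (∀ x ∈ Icc S.A S.B, f x = g x) →
      ∫ x in S.A..S.B, f x = ∫ x in S.A..S.B, g x := fun h =>
    intervalIntegral.integral_congr fun x hx => h x (uIcc_of_le S.lt.le ▸ hx)
  have hc₀ : 0 ≤ c := hc S.A (left_mem_Icc.2 S.lt.le) ▸ hF.nonneg S.A
  have hmassF : 1 ≤ c ^ p * m := by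
    have hmass : S.mass p F = S.mass p fun _ => c := hcongr fun x hx => by rw [hc x hx]
    rw [← abs_of_nonneg hc₀, ← mass_const, ← hmass]
    exact hF.one_le_mass
  have hmass₀ : S.mass p (fun x => F x + -c * 1) = 0 := by
    have hmass : S.mass p (fun x => F x + -c * 1) = S.mass p fun _ => 0 :=
      hcongr fun x hx => by simp [hc x hx]
    rw [hmass, mass_const, abs_zero, zero_rpow hp.ne', zero_mul]
  have hweak : S.weakForm l F (fun _ => 1) 0 = l * (c * m) := by
    have hFw : ∫ x in S.A..S.B, F x * 1 * S.w x = c * m := by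
      rw [hm, ← intervalIntegral.integral_const_mul]
      exact hcongr fun x hx => by rw [hc x hx, mul_one]
    simp [weakForm, ← hFw]
  have hmin := hF.bestConst_le _ _ _ (isNeumannSolution_const 1) (-c)
  rw [hmass₀, zero_rpow (by positivity), hweak, energy_const] at hmin
  calc l * m ^ (1 - 2 / p) = l * (1 ^ (2 / p) * m ^ (1 - 2 / p)) := by rw [one_rpow, one_mul]
    _ ≤ l * ((c ^ p * m) ^ (2 / p) * m ^ (1 - 2 / p)) := by gcongr
    _ = l * (c ^ 2 * m) := by
        rw [mul_rpow (by positivity) hmpos.le, ← rpow_mul hc₀, mul_assoc, ← rpow_add hmpos,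
          mul_div_cancel₀ _ hp.ne', rpow_two, add_sub_cancel, rpow_one]
    _ ≤ S.bestConst l p := by linarith

end IsRelaxedMinimizer

variable (S) in
/-- Rigidity of the Euler–Lagrange equation `-(ρ u')' + l u w = J u ^ (p - 1) w` with Neumann
boundary conditions: every positive solution is constant, whatever the multiplier `J`. -/
def IsRigid (l p : ℝ) : Prop :=
  ∀ J u H k, S.IsNeumannSolution u H k → (∀ x ∈ Icc S.A S.B, 0 < u x) →
    (∀ x ∈ Icc S.A S.B, k x = (l * u x - J * u x ^ (p - 1)) * S.w x) →
    ∃ c, ∀ x ∈ Icc S.A S.B, u x = c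

lemma IsNeumannSolution.pos_of_semilinear (hu : S.IsNeumannSolution u H k)
    (hnonneg : ∀ x ∈ Icc S.A S.B, 0 ≤ u x) (hne : ∃ x ∈ Icc S.A S.B, u x ≠ 0) {J : ℝ} (hp : 2 ≤ p)
    (hk : ∀ x ∈ Icc S.A S.B, k x = (l * u x - J * u x ^ (p - 1)) * S.w x) :
    ∀ x ∈ Icc S.A S.B, 0 < u x := by
  have huc := hu.contDiff.continuous
  have hup : Continuous fun x => u x ^ (p - 2) := huc.rpow_const fun _ => Or.inr (by linarith)
  have hw := S.continuous_w
  obtain ⟨K, hK⟩ := isCompact_Icc.exists_bound_of_continuousOn (s := Icc S.A S.B)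
    (by fun_prop : Continuous fun x => (l - J * u x ^ (p - 2)) * S.w x).continuousOn
  refine hu.pos_of_nonneg hnonneg (K := K) (fun x hx => ?_) hne
  have hfactor : k x = (l - J * u x ^ (p - 2)) * S.w x * u x := by
    rw [hk x hx, show p - 1 = p - 2 + 1 by ring,
      rpow_add_one' (hnonneg x hx) (by linarith)]
    ring
  rw [hfactor, abs_mul]
  exact mul_le_mul_of_nonneg_right (hK x hx) (abs_nonneg _)

theorem IsRigid.sobolev_inequality (hS : S.IsRigid l p) (hl : 0 < l) (hp : 2 ≤ p)
    (hf : ContDiff ℝ 1 f) :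
    l * (∫ x in S.A..S.B, S.w x) ^ (1 - 2 / p) * S.mass p f ^ (2 / p) ≤ S.energy l f := by
  obtain ⟨F, hF⟩ := exists_isRelaxedMinimizer (S := S) hl (by linarith : 0 < p)
  obtain ⟨J, u, H, hu, huF⟩ := hF.exists_isNeumannSolution hl.le (by linarith)
  have hk : ∀ x ∈ Icc S.A S.B, (l * F x - J * F x ^ (p - 1)) * S.w x =
      (l * u x - J * u x ^ (p - 1)) * S.w x := fun x hx => by rw [huF hx]
  obtain ⟨c, hc⟩ : ∃ c, ∀ x ∈ Icc S.A S.B, u x = c := by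
    by_cases! hne : ∃ x ∈ Icc S.A S.B, u x ≠ 0
    · exact hS J u H _ hu (hu.pos_of_semilinear (fun x hx => huF hx ▸ hF.nonneg x) hne hp hk) hk
    · exact ⟨0, hne⟩
  have hconst := hF.mul_integral_w_rpow_le hl.le (by linarith) fun x hx => huF hx ▸ hc x hx
  exact (mul_le_mul_of_nonneg_right hconst (rpow_nonneg (S.mass_nonneg p f) _)).trans
    (S.bestConst_mul_mass_rpow_le hl.le (by linarith) hf)

end Minimizer

end SturmLiouville

section Rigidity

variable {d p σ l J a x G : ℝ} {f g : ℝ → ℝ}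

lemma one_sub_sq_pos (hx : x ∈ Ioo (-1) 1) : 0 < 1 - x ^ 2 := by nlinarith [hx.1, hx.2]

lemma hasDerivAt_one_sub_sq (x : ℝ) : HasDerivAt (fun y : ℝ => 1 - y ^ 2) (-(2 * x)) x := by
  simpa using ((hasDerivAt_id x).pow 2).const_sub 1

lemma hasDerivAt_one_sub_sq_rpow (hx : x ∈ Ioo (-1) 1) (q : ℝ) :
    HasDerivAt (fun y : ℝ => (1 - y ^ 2) ^ q) (-(2 * q) * x * (1 - x ^ 2) ^ (q - 1)) x :=
  ((hasDerivAt_one_sub_sq x).rpow_const (p := q)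
    (Or.inl (one_sub_sq_pos hx).ne')).congr_deriv (by ring)

/-- The quantity whose monotonicity forces positive solutions of
`(1 - x²) f'' - d x f' = l f - J f ^ (p - 1)` to be constant; `g` stands for `f'`, and
`l f - J f ^ (p - 1) + d x f'` for `(1 - x²) f''`, so that no second derivative occurs.
The argument calls for `(d + 2) σ = p - 1`. -/
def rigidityFlux (d p σ l J : ℝ) (f g : ℝ → ℝ) (x : ℝ) : ℝ :=
  (1 - x ^ 2) ^ (d / 2) * f x ^ (-2 * σ) *
    (g x * (l * f x - J * f x ^ (p - 1) + d * x * g x) -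
      d * σ * (1 - x ^ 2) * g x ^ 3 / f x)

/-- The derivative of `rigidityFlux` along a solution, with `G` standing for `f''`, written as a
combination of squares. -/
def rigidityDissipation (d p σ l : ℝ) (x F g G : ℝ) : ℝ :=
  (1 - x ^ 2) ^ (d / 2) * F ^ (-2 * σ) *
    ((1 - x ^ 2) * ((G - d * σ * (g ^ 2 / F)) ^ 2 +
      d * σ * (1 + 2 * σ - d * σ) * (g ^ 2 / F) ^ 2) + (d - l * (p - 2)) * g ^ 2)

lemma hasDerivAt_rigidityFlux (hσ : (d + 2) * σ = p - 1) (hx : x ∈ Ioo (-1) 1) (hpos : 0 < f x)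
    (hf : HasDerivAt f (g x) x) (hg : HasDerivAt g G x)
    (hode : (1 - x ^ 2) * G = l * f x - J * f x ^ (p - 1) + d * x * g x) :
    HasDerivAt (rigidityFlux d p σ l J f g) (rigidityDissipation d p σ l x (f x) (g x) G) x := by
  have hν := one_sub_sq_pos hx
  have hrpow (q : ℝ) : HasDerivAt (fun y => f y ^ q) (q * (f x ^ q / f x) * g x) x := by
    refine (hf.rpow_const (Or.inl hpos.ne')).congr_deriv ?_
    rw [rpow_sub_one hpos.ne']
    ring
  have hflux := ((hasDerivAt_one_sub_sq_rpow hx (d / 2)).mul (hrpow (-2 * σ))).mul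
    ((hg.mul (((hf.const_mul l).sub ((hrpow (p - 1)).const_mul J)).add
      (((hasDerivAt_id x).const_mul d).mul hg))).sub
      ((((hasDerivAt_one_sub_sq x).const_mul (d * σ)).mul (hg.pow 3)).div hf hpos.ne'))
  refine hflux.congr_deriv ?_
  simp only [rigidityDissipation, Pi.mul_apply, Pi.sub_apply, Pi.add_apply, Pi.pow_apply,
    Pi.div_apply, id, rpow_sub_one hν.ne']
  generalize f x ^ (p - 1) = V at hode ⊢
  have hl : l = ((1 - x ^ 2) * G + J * V - d * x * g x) / f x := by
    rw [hode]
    field_simp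
    ring
  have hp : p = (d + 2) * σ + 1 := by linarith
  rw [hl, hp]
  field_simp
  ring

lemma le_rigidityDissipation {F g : ℝ} (hd : 0 < d) (hp : p * (d - 2) ≤ 2 * d)
    (hσ : (d + 2) * σ = p - 1) (hσ₀ : 0 ≤ σ) (hx : x ∈ Ioo (-1) 1) (hF : 0 < F) :
    (1 - x ^ 2) ^ (d / 2) * F ^ (-2 * σ) * ((d - l * (p - 2)) * g ^ 2) ≤
      rigidityDissipation d p σ l x F g G := by
  have hν := one_sub_sq_pos hx
  have hcoeff : 0 ≤ 1 + 2 * σ - d * σ := by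
    refine nonneg_of_mul_nonneg_right (a := d + 2) ?_ (by linarith)
    have : (d + 2) * (1 + 2 * σ - d * σ) = d + 2 - (d - 2) * (p - 1) := by rw [← hσ]; ring
    linarith
  unfold rigidityDissipation
  gcongr
  exact le_add_of_nonneg_left (by positivity)

lemma continuousOn_rigidityFlux {s : Set ℝ} (hs : s ⊆ Ioo (-1) 1) (hpos : ∀ x ∈ s, 0 < f x)
    (hf : ContinuousOn f s) (hg : ContinuousOn g s) :
    ContinuousOn (rigidityFlux d p σ l J f g) s := by
  have hrpow (q : ℝ) : ContinuousOn (fun x => f x ^ q) s :=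
    hf.rpow_const fun x hx => Or.inl (hpos x hx).ne'
  have hν : ContinuousOn (fun x : ℝ => (1 - x ^ 2) ^ (d / 2)) s :=
    ContinuousOn.rpow_const (by fun_prop) fun x hx => Or.inl (one_sub_sq_pos (hs hx)).ne'
  have hquot : ContinuousOn (fun x => d * σ * (1 - x ^ 2) * g x ^ 3 / f x) s :=
    ContinuousOn.div (by fun_prop) hf fun x hx => (hpos x hx).ne'
  unfold rigidityFlux
  fun_prop

theorem eq_zero_of_ultraspherical_ode {g' : ℝ → ℝ} (hd : 0 < d) (hp₁ : 1 ≤ p)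
    (hp : p * (d - 2) ≤ 2 * d) (hl : l * (p - 2) < d) (ha : a < 1)
    (hpos : ∀ x ∈ Icc (-a) a, 0 < f x) (hf : ∀ x ∈ Icc (-a) a, HasDerivAt f (g x) x)
    (hgc : ContinuousOn g (Icc (-a) a)) (hg : ∀ x ∈ Ioo (-a) a, HasDerivAt g (g' x) x)
    (hleft : g (-a) = 0) (hright : g a = 0)
    (hode : ∀ x ∈ Ioo (-a) a,
      (1 - x ^ 2) * g' x = l * f x - J * f x ^ (p - 1) + d * x * g x) :
    ∀ x ∈ Ioo (-a) a, g x = 0 := by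
  obtain ⟨σ, hσ⟩ : ∃ σ, (d + 2) * σ = p - 1 := ⟨(p - 1) / (d + 2), by field_simp⟩
  have hσ₀ : 0 ≤ σ := nonneg_of_mul_nonneg_right (a := d + 2) (by linarith) (by linarith)
  have hsub : Icc (-a) a ⊆ Ioo (-1) 1 := Icc_subset_Ioo (by linarith) ha
  have hP : ∀ x ∈ Ioo (-a) a, HasDerivAt (rigidityFlux d p σ l J f g)
      (rigidityDissipation d p σ l x (f x) (g x) (g' x)) x :=
    fun x hx => hasDerivAt_rigidityFlux hσ (hsub (Ioo_subset_Icc_self hx))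
      (hpos x (Ioo_subset_Icc_self hx)) (hf x (Ioo_subset_Icc_self hx)) (hg x hx) (hode x hx)
  have hfc : ContinuousOn f (Icc (-a) a) := fun x hx => (hf x hx).continuousAt.continuousWithinAt
  have hgap : 0 < d - l * (p - 2) := by linarith
  have hfactor : ∀ x ∈ Ioo (-a) a, 0 < (1 - x ^ 2) ^ (d / 2) * f x ^ (-2 * σ) := fun x hx =>
    mul_pos (rpow_pos_of_pos (one_sub_sq_pos (hsub (Ioo_subset_Icc_self hx))) _)
      (rpow_pos_of_pos (hpos x (Ioo_subset_Icc_self hx)) _)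
  have hbound : ∀ x ∈ Ioo (-a) a,
      (1 - x ^ 2) ^ (d / 2) * f x ^ (-2 * σ) * ((d - l * (p - 2)) * g x ^ 2) ≤
        rigidityDissipation d p σ l x (f x) (g x) (g' x) := fun x hx =>
    le_rigidityDissipation hd hp hσ hσ₀ (hsub (Ioo_subset_Icc_self hx))
      (hpos x (Ioo_subset_Icc_self hx))
  have hstationary := eq_zero_of_hasDerivAt_nonneg_of_eq
    (continuousOn_rigidityFlux hsub hpos hfc hgc) hP
    (fun x hx => (mul_nonneg (hfactor x hx).le (by positivity)).trans (hbound x hx))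
    (by simp [rigidityFlux, hleft, hright])
  intro x hx
  have hle := nonpos_of_mul_nonpos_right ((hbound x hx).trans_eq (hstationary x hx)) (hfactor x hx)
  exact pow_eq_zero_iff two_ne_zero |>.1
    (le_antisymm (nonpos_of_mul_nonpos_right hle hgap) (sq_nonneg _))

end Rigidity

section Interval

variable {d p l a x : ℝ} {f : ℝ → ℝ} {ha₀ : 0 < a} {ha₁ : a < 1}

/-- The ultraspherical Sturm–Liouville problem, with `ρ x = (1 - x²) ^ (d / 2)` and
`w x = (1 - x²) ^ (d / 2 - 1)`, truncated to `[-a, a]` to make it regular. Outside `[-a, a]` the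
factor `1 - x²` is replaced by `1 - a²`. -/
def ultrasphericalInterval (d a : ℝ) (ha₀ : 0 < a) (ha₁ : a < 1) : SturmLiouville :=
  have hpos : ∀ x : ℝ, 0 < max (1 - x ^ 2) (1 - a ^ 2) := fun _ =>
    lt_max_of_lt_right (by nlinarith)
  have hcont (q : ℝ) : Continuous fun x : ℝ => max (1 - x ^ 2) (1 - a ^ 2) ^ q :=
    (by fun_prop : Continuous fun x : ℝ => max (1 - x ^ 2) (1 - a ^ 2)).rpow_const
      fun x => Or.inl (hpos x).ne'
  { A := -a
    B := a
    ρ := fun x => max (1 - x ^ 2) (1 - a ^ 2) ^ (d / 2)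
    w := fun x => max (1 - x ^ 2) (1 - a ^ 2) ^ (d / 2 - 1)
    lt := by linarith
    continuous_ρ := hcont _
    continuous_w := hcont _
    ρ_pos := fun x => rpow_pos_of_pos (hpos x) _
    w_pos := fun x => rpow_pos_of_pos (hpos x) _ }

lemma max_one_sub_sq_of_mem_Icc (hx : x ∈ Icc (-a) a) :
    max (1 - x ^ 2) (1 - a ^ 2) = 1 - x ^ 2 :=
  max_eq_left (by nlinarith [hx.1, hx.2])

lemma ultrasphericalInterval_ρ (hx : x ∈ Icc (-a) a) :
    (ultrasphericalInterval d a ha₀ ha₁).ρ x = (1 - x ^ 2) ^ (d / 2) :=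
  congrArg (· ^ (d / 2)) (max_one_sub_sq_of_mem_Icc hx)

lemma ultrasphericalInterval_w (hx : x ∈ Icc (-a) a) :
    (ultrasphericalInterval d a ha₀ ha₁).w x = (1 - x ^ 2) ^ (d / 2 - 1) :=
  congrArg (· ^ (d / 2 - 1)) (max_one_sub_sq_of_mem_Icc hx)

lemma hasDerivAt_flux_div_ρ {H : ℝ → ℝ} {r : ℝ} (hx : x ∈ Ioo (-a) a)
    (hH : HasDerivAt H (r * (ultrasphericalInterval d a ha₀ ha₁).w x) x) :
    HasDerivAt (fun y => H y / (ultrasphericalInterval d a ha₀ ha₁).ρ y)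
      ((r + d * x * (H x / (ultrasphericalInterval d a ha₀ ha₁).ρ x)) / (1 - x ^ 2)) x := by
  have hx' : x ∈ Ioo (-1) 1 := ⟨by linarith [hx.1], by linarith [hx.2]⟩
  have hν := one_sub_sq_pos hx'
  have hρ : HasDerivAt (ultrasphericalInterval d a ha₀ ha₁).ρ
      (-(2 * (d / 2)) * x * (1 - x ^ 2) ^ (d / 2 - 1)) x :=
    (hasDerivAt_one_sub_sq_rpow hx' (d / 2)).congr_of_eventuallyEq
      (eventually_of_mem (Icc_mem_nhds hx.1 hx.2) fun _ => ultrasphericalInterval_ρ)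
  refine (hH.div hρ ((ultrasphericalInterval d a ha₀ ha₁).ρ_pos x).ne').congr_deriv ?_
  have : 0 < (1 - x ^ 2) ^ (d / 2) := by positivity
  rw [ultrasphericalInterval_w (Ioo_subset_Icc_self hx),
    ultrasphericalInterval_ρ (Ioo_subset_Icc_self hx), rpow_sub_one hν.ne']
  field_simp
  ring

theorem isRigid_ultrasphericalInterval (hd : 0 < d) (hp₁ : 1 ≤ p) (hp : p * (d - 2) ≤ 2 * d)
    (hl : l * (p - 2) < d) : (ultrasphericalInterval d a ha₀ ha₁).IsRigid l p := by
  set S := ultrasphericalInterval d a ha₀ ha₁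
  intro J u H k hu hpos hk
  have hzero : ∀ x ∈ Ioo (-a) a, H x / S.ρ x = 0 := by
    refine eq_zero_of_ultraspherical_ode (J := J) hd hp₁ hp hl ha₁ hpos
      (fun x _ => hu.hasDerivAt x)
      (hu.continuous_flux.div S.continuous_ρ fun x => (S.ρ_pos x).ne').continuousOn
      (fun x hx => hasDerivAt_flux_div_ρ hx
        (hk x (Ioo_subset_Icc_self hx) ▸ hu.hasDerivAt_flux x))
      (div_eq_zero_iff.2 (Or.inl hu.flux_left)) (div_eq_zero_iff.2 (Or.inl hu.flux_right))
      fun x hx => mul_div_cancel₀ _ (one_sub_sq_pos ?_).ne'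
    exact ⟨by linarith [hx.1], by linarith [hx.2]⟩
  have hderiv : ∀ x ∈ Ico (-a) a, HasDerivWithinAt u 0 (Ici x) x := fun x hx => by
    have hflux : H x / S.ρ x = 0 := by
      rcases hx.1.eq_or_lt with rfl | hlt
      · exact div_eq_zero_iff.2 (Or.inl hu.flux_left)
      · exact hzero x ⟨hlt, hx.2⟩
    exact hflux ▸ (hu.hasDerivAt x).hasDerivWithinAt
  exact ⟨u (-a), constant_of_has_deriv_right_zero hu.contDiff.continuous.continuousOn hderiv⟩

lemma ultrasphericalInterval_sobolev_inequality (ha₀ : 0 < a) (ha₁ : a < 1) (hd : 0 < d)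
    (hp₂ : 2 ≤ p) (hp : p * (d - 2) ≤ 2 * d) (hl₀ : 0 < l) (hl : l * (p - 2) < d)
    (hf : ContDiff ℝ 1 f) :
    l * (∫ x in -a..a, (1 - x ^ 2) ^ (d / 2 - 1)) ^ (1 - 2 / p) *
        (∫ x in -a..a, |f x| ^ p * (1 - x ^ 2) ^ (d / 2 - 1)) ^ (2 / p) ≤
      (∫ x in -a..a, (1 - x ^ 2) ^ (d / 2) * deriv f x ^ 2) +
        l * ∫ x in -a..a, f x ^ 2 * (1 - x ^ 2) ^ (d / 2 - 1) := by
  have hrigid := isRigid_ultrasphericalInterval (ha₀ := ha₀) (ha₁ := ha₁) hd (by linarith) hp hl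
  have huIcc {x : ℝ} (hx : x ∈ uIcc (-a) a) : x ∈ Icc (-a) a := by
    rwa [uIcc_of_le (by linarith)] at hx
  have hρ (h : ℝ → ℝ) : ∫ x in -a..a, (ultrasphericalInterval d a ha₀ ha₁).ρ x * h x =
      ∫ x in -a..a, (1 - x ^ 2) ^ (d / 2) * h x :=
    intervalIntegral.integral_congr fun x hx => by simp only [ultrasphericalInterval_ρ (huIcc hx)]
  have hw (h : ℝ → ℝ) : ∫ x in -a..a, h x * (ultrasphericalInterval d a ha₀ ha₁).w x =
      ∫ x in -a..a, h x * (1 - x ^ 2) ^ (d / 2 - 1) :=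
    intervalIntegral.integral_congr fun x hx => by simp only [ultrasphericalInterval_w (huIcc hx)]
  have hw₁ := hw 1
  simp only [Pi.one_apply, one_mul] at hw₁
  rw [← hρ, ← hw, ← hw, ← hw₁]
  exact hrigid.sobolev_inequality hl₀ hp₂ hf

end Interval

section Limit

variable {d p α β : ℝ} {f h : ℝ → ℝ}

lemma integral_rpow_mul_one_sub_rpow (hα : 0 < α) (hβ : 0 < β) :
    ∫ x in (0 : ℝ)..1, x ^ (α - 1) * (1 - x) ^ (β - 1) =
      Gamma α * Gamma β / Gamma (α + β) := by
  have hreal : Complex.betaIntegral α β =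
      ((∫ x in (0 : ℝ)..1, x ^ (α - 1) * (1 - x) ^ (β - 1) : ℝ) : ℂ) := by
    rw [Complex.betaIntegral, ← intervalIntegral.integral_ofReal]
    refine intervalIntegral.integral_congr fun x hx => ?_
    rw [uIcc_of_le zero_le_one] at hx
    simp [Complex.ofReal_cpow hx.1, Complex.ofReal_cpow (sub_nonneg.2 hx.2)]
  rw [← ProbabilityTheory.beta, ProbabilityTheory.beta_eq_betaIntegralReal α β hα hβ, hreal,
    Complex.ofReal_re]

lemma integral_one_sub_sq_rpow (hα : 0 < α) :
    ∫ x in Ioo (-1 : ℝ) 1, (1 - x ^ 2) ^ (α - 1) = √π * Gamma α / Gamma (α + 1 / 2) := by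
  have hscale : ∫ x in (0 : ℝ)..1, (1 - (2 * x - 1) ^ 2) ^ (α - 1) =
      (4 : ℝ) ^ (α - 1) * (Gamma α * Gamma α / Gamma (2 * α)) := by
    rw [two_mul, ← integral_rpow_mul_one_sub_rpow hα hα, ← intervalIntegral.integral_const_mul]
    refine intervalIntegral.integral_congr fun x hx => ?_
    rw [uIcc_of_le zero_le_one] at hx
    have hx' := sub_nonneg.2 hx.2
    simp only [← mul_rpow hx.1 hx', ← mul_rpow zero_le_four (mul_nonneg hx.1 hx')]
    ring_nf
  have hpow : (4 : ℝ) ^ (α - 1) * 2 * 2 ^ (1 - 2 * α) = 1 := by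
    rw [show (4 : ℝ) = 2 ^ (2 : ℝ) by norm_num, ← rpow_mul zero_le_two,
      ← rpow_add_one two_ne_zero, ← rpow_add zero_lt_two]
    ring_nf
    exact rpow_zero 2
  have hΓ := (Gamma_pos_of_pos (by linarith : 0 < α + 1 / 2)).ne'
  have hΓ₂ := (Gamma_pos_of_pos (by linarith : 0 < 2 * α)).ne'
  have hchange := intervalIntegral.mul_integral_comp_mul_sub (a := 0) (b := 1)
    (f := fun x : ℝ => (1 - x ^ 2) ^ (α - 1)) (c := 2) (d := 1)
  norm_num only at hchange
  rw [← integral_Ioc_eq_integral_Ioo, ← intervalIntegral.integral_of_le (by norm_num), ← hchange,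
    hscale]
  have hduplication := Gamma_mul_Gamma_add_half α
  generalize Gamma (α + 1 / 2) = Γ at hΓ hduplication ⊢
  field_simp
  linear_combination 2 * (4 : ℝ) ^ (α - 1) * hduplication + Gamma (2 * α) * √π * hpow

lemma integrableOn_one_sub_sq_rpow (hα : 0 < α) :
    IntegrableOn (fun x : ℝ => (1 - x ^ 2) ^ (α - 1)) (Ioo (-1) 1) := by
  by_contra hnot
  have hpos : 0 < √π * Gamma α / Gamma (α + 1 / 2) := by
    have := Gamma_pos_of_pos hα
    have := Gamma_pos_of_pos (by linarith : 0 < α + 1 / 2)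
    positivity
  exact hpos.ne ((integral_undef hnot).symm.trans (integral_one_sub_sq_rpow hα))

lemma tendsto_integral_mul_one_sub_sq_rpow (hα : 0 < α) (hh : Continuous h) :
    Tendsto (fun a => ∫ x in -a..a, h x * (1 - x ^ 2) ^ (α - 1)) (𝓝[<] 1)
      (𝓝 (∫ x in Ioo (-1) 1, h x * (1 - x ^ 2) ^ (α - 1))) := by
  refine tendsto_intervalIntegral_neg_self ?_
  have hintegrable := integrableOn_one_sub_sq_rpow hα
  rw [← integrableOn_Icc_iff_integrableOn_Ioo] at hintegrable ⊢
  exact hintegrable.continuousOn_mul hh.continuousOn isCompact_Icc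

theorem sobolev_inequality_Ioo_of_contDiff (hd : 0 < d) (hp₂ : 2 < p)
    (hp : p * (d - 2) ≤ 2 * d) (hf : ContDiff ℝ 1 f) :
    d / (p - 2) * (∫ x in Ioo (-1 : ℝ) 1, (1 - x ^ 2) ^ (d / 2 - 1)) ^ (1 - 2 / p) *
        (∫ x in Ioo (-1) 1, |f x| ^ p * (1 - x ^ 2) ^ (d / 2 - 1)) ^ (2 / p) ≤
      (∫ x in Ioo (-1) 1, (1 - x ^ 2) ^ (d / 2) * deriv f x ^ 2) +
        d / (p - 2) * ∫ x in Ioo (-1) 1, f x ^ 2 * (1 - x ^ 2) ^ (d / 2 - 1) := by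
  have hfc := hf.continuous
  have hgap : 0 < p - 2 := sub_pos.2 hp₂
  have hl : Tendsto (fun a : ℝ => a * (d / (p - 2))) (𝓝[<] 1) (𝓝 (d / (p - 2))) :=
    ((continuous_mul_const (d / (p - 2))).tendsto' 1 _ (one_mul _)).mono_left nhdsWithin_le_nhds
  have hmass := tendsto_intervalIntegral_neg_self (integrableOn_one_sub_sq_rpow (half_pos hd))
  have hnorm := tendsto_integral_mul_one_sub_sq_rpow (half_pos hd)
    (hfc.abs.rpow_const fun _ => Or.inr (by linarith : 0 ≤ p))
  have hsq := tendsto_integral_mul_one_sub_sq_rpow (half_pos hd) (hfc.pow 2)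
  have hdirichlet : Tendsto (fun a => ∫ x in -a..a, (1 - x ^ 2) ^ (d / 2) * deriv f x ^ 2)
      (𝓝[<] 1) (𝓝 (∫ x in Ioo (-1) 1, (1 - x ^ 2) ^ (d / 2) * deriv f x ^ 2)) := by
    refine tendsto_intervalIntegral_neg_self
      ((Continuous.integrableOn_Icc (a := -1) (b := 1) ?_).mono_set Ioo_subset_Icc_self)
    exact ((by fun_prop : Continuous fun x : ℝ => 1 - x ^ 2).rpow_const
      fun _ => Or.inr (by positivity)).mul ((hf.continuous_deriv le_rfl).pow 2)
  have hexp : 0 ≤ 1 - 2 / p := sub_nonneg.2 ((div_le_one (by linarith)).2 hp₂.le)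
  refine le_of_tendsto_of_tendsto
    ((hl.mul (hmass.rpow_const (Or.inr hexp))).mul (hnorm.rpow_const (Or.inr (by positivity))))
    (hdirichlet.add (hl.mul hsq)) ?_
  filter_upwards [Ioo_mem_nhdsLT one_pos] with a ha
  refine ultrasphericalInterval_sobolev_inequality ha.1 ha.2 hd hp₂.le hp
    (mul_pos ha.1 (div_pos hd hgap)) ?_ hf
  rw [mul_assoc, div_mul_cancel₀ _ hgap.ne']
  exact mul_lt_of_lt_one_left hd ha.2

theorem sobolev_inequality_Ioo (hd : 0 < d) (hp₂ : 2 < p) (hp : p * (d - 2) ≤ 2 * d)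
    (hf : ContDiffOn ℝ 1 f (Icc (-1) 1)) :
    d / (p - 2) * (∫ x in Ioo (-1 : ℝ) 1, (1 - x ^ 2) ^ (d / 2 - 1)) ^ (1 - 2 / p) *
        (∫ x in Ioo (-1) 1, |f x| ^ p * (1 - x ^ 2) ^ (d / 2 - 1)) ^ (2 / p) ≤
      (∫ x in Ioo (-1) 1, (1 - x ^ 2) ^ (d / 2) * deriv f x ^ 2) +
        d / (p - 2) * ∫ x in Ioo (-1) 1, f x ^ 2 * (1 - x ^ 2) ^ (d / 2 - 1) := by
  obtain ⟨g, hg, hgf⟩ := exists_contDiff_eqOn_Icc (by norm_num : (-1 : ℝ) < 1) hf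
  have hgf' : EqOn g f (Ioo (-1) 1) := hgf.mono Ioo_subset_Icc_self
  have hcongr (F : ℝ → ℝ → ℝ → ℝ) : ∫ x in Ioo (-1) 1, F x (g x) (deriv g x) =
      ∫ x in Ioo (-1) 1, F x (f x) (deriv f x) :=
    setIntegral_congr_fun measurableSet_Ioo fun x hx => by
      simp only [hgf' hx, (hgf'.eventuallyEq_of_mem (Ioo_mem_nhds hx.1 hx.2)).deriv_eq]
  have hineq := sobolev_inequality_Ioo_of_contDiff hd hp₂ hp hg
  rwa [hcongr fun x y _ => |y| ^ p * (1 - x ^ 2) ^ (d / 2 - 1),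
    hcongr fun x _ y' => (1 - x ^ 2) ^ (d / 2) * y' ^ 2,
    hcongr fun x y _ => y ^ 2 * (1 - x ^ 2) ^ (d / 2 - 1)] at hineq

end Limit

section Normalization

variable {d : ℝ}

/-- The normalization constant `Zd`, for a real dimension `d`. -/
def ultrasphericalConst (d : ℝ) : ℝ := √π * Gamma (d / 2) / Gamma ((d + 1) / 2)

/-- The probability measure `nuMeas`, for a real dimension `d`. -/
def ultrasphericalMeasure (d : ℝ) : Measure ℝ :=
  (volume.restrict (Ioo (-1) 1)).withDensity
    fun x => ENNReal.ofReal ((1 - x ^ 2) ^ (d / 2 - 1) / ultrasphericalConst d)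

lemma ultrasphericalConst_pos (hd : 0 < d) : 0 < ultrasphericalConst d := by
  have := Gamma_pos_of_pos (by positivity : 0 < d / 2)
  have := Gamma_pos_of_pos (by positivity : 0 < (d + 1) / 2)
  unfold ultrasphericalConst
  positivity

lemma integral_one_sub_sq_rpow_eq_ultrasphericalConst (hd : 0 < d) :
    ∫ x in Ioo (-1 : ℝ) 1, (1 - x ^ 2) ^ (d / 2 - 1) = ultrasphericalConst d := by
  rw [integral_one_sub_sq_rpow (half_pos hd), ← add_div, ultrasphericalConst]

lemma integral_ultrasphericalMeasure (hd : 0 < d) (h : ℝ → ℝ) :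
    ∫ x, h x ∂ultrasphericalMeasure d =
      (∫ x in Ioo (-1) 1, h x * (1 - x ^ 2) ^ (d / 2 - 1)) / ultrasphericalConst d := by
  rw [ultrasphericalMeasure, integral_withDensity_eq_integral_toReal_smul (by fun_prop) (by simp),
    ← integral_div]
  refine setIntegral_congr_fun measurableSet_Ioo fun x hx => ?_
  have hν := one_sub_sq_pos hx
  have hZ := ultrasphericalConst_pos hd
  simp only [smul_eq_mul]
  rw [ENNReal.toReal_ofReal (by positivity)]
  ring

end Normalization

end Ultraspherical

open Ultraspherical in
theorem ultraspherical_supercritical_general {d p : ℝ} (hd : 0 < d) (hp2 : 2 < p)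
    (hp : 2 < d → p ≤ 2 * d / (d - 2)) {f : ℝ → ℝ} (hf : ContDiffOn ℝ 1 f (Set.Icc (-1) 1)) :
    ∫ x, (deriv f x) ^ 2 * (1 - x ^ 2) ∂ultrasphericalMeasure d ≥
      d * (((∫ x, |f x| ^ p ∂ultrasphericalMeasure d) ^ (2 / p) -
        ∫ x, |f x| ^ (2 : ℝ) ∂ultrasphericalMeasure d) / (p - 2)) := by
  have hpd : p * (d - 2) ≤ 2 * d := by
    rcases lt_or_ge 2 d with h | h
    · exact (le_div_iff₀ (sub_pos.2 h)).1 (hp h)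
    · nlinarith
  have hdirichlet : ∫ x in Set.Ioo (-1) 1, (1 - x ^ 2) ^ (d / 2) * deriv f x ^ 2 =
      ∫ x in Set.Ioo (-1) 1, deriv f x ^ 2 * (1 - x ^ 2) * (1 - x ^ 2) ^ (d / 2 - 1) :=
    setIntegral_congr_fun measurableSet_Ioo fun x hx => by
      have hν := one_sub_sq_pos hx
      simp only [rpow_sub_one hν.ne']
      field_simp
  have hmass : 0 ≤ ∫ x in Set.Ioo (-1) 1, |f x| ^ p * (1 - x ^ 2) ^ (d / 2 - 1) :=
    setIntegral_nonneg measurableSet_Ioo fun x hx => by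
      have := one_sub_sq_pos hx
      positivity
  have hZ := ultrasphericalConst_pos hd
  have hineq := sobolev_inequality_Ioo hd hp2 hpd hf
  rw [integral_one_sub_sq_rpow_eq_ultrasphericalConst hd, rpow_sub hZ, rpow_one,
    hdirichlet] at hineq
  simp only [integral_ultrasphericalMeasure hd, rpow_two, sq_abs]
  rw [div_rpow hmass hZ.le, ge_iff_le, le_div_iff₀ hZ]
  refine le_trans (Eq.le ?_) (sub_le_iff_le_add.2 hineq)
  have := sub_pos.2 hp2
  field_simp

theorem ultraspherical_supercritical (d : ℕ) (hd : 1 ≤ d) (p : ℝ) (hp2 : 2 < p)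
    (hp : 3 ≤ d → p ≤ 2 * d / ((d : ℝ) - 2))
    (f : ℝ → ℝ) (hf : ContDiffOn ℝ 1 f (Set.Icc (-1 : ℝ) 1)) :
    ∫ x, (deriv f x) ^ 2 * (1 - x ^ 2) ∂(nuMeas d) ≥
      d * (((∫ x, |f x| ^ p ∂(nuMeas d)) ^ (2 / p) -
        ∫ x, |f x| ^ (2 : ℝ) ∂(nuMeas d)) / (p - 2)) :=
  ultraspherical_supercritical_general (by exact_mod_cast hd) hp2
    (fun h => hp (by exact_mod_cast h)) hf
end
end

section
/- Ultraspherical interpolation inequality, subcritical range: let d ≥ 1 and let p ∈ [1, 2). Then for every continuously differentiable function f on [−1,1], ∫_{−1}^{1} |f'(x)|² ν(x) dν_d(x) ≥ d ( ‖f‖_2² − ‖f‖_p² ) / (2 − p), where ‖f‖_q = ( ∫_{−1}^{1} |f|^q dν_d )^{1/q}. -/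
open MeasureTheory Real

noncomputable section

/-!
Let `L u = (1 - x²) u'' - d x u'` be the generator of the Dirichlet form `∫ u'² (1 - x²) dν_d`, and
run the linear heat flow `∂ₜ u = L u` from `u = |f|^p`. With `q = 2 / p`, the entropy `∫ u^q dν_d`
decays at rate `q (q - 1) I(u)`, where `I(u) = ∫ u^(q - 2) u'² (1 - x²) dν_d`, and integrating by
parts in `dI/dt` gives `dI/dt ≤ -2 d I` as long as `1 ≤ q ≤ 2`. Hence the entropy minus
`q (q - 1) / (2 d) * I` increases along the flow; as `u` converges to its mean, comparing `t = 0`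
with `t = ∞` is the inequality.

Polynomials are sums of eigenvectors of `L`, so for a positive polynomial the flow is an explicit
finite sum of decaying exponentials. A positive `C¹` function is a `C¹` limit of polynomials, and
`|f|^p` is the limit of `(f² + ε)^(p / 2)` as `ε → 0`.
-/
open Set Filter Topology Polynomial

variable {d : ℕ}

/-- The unnormalized density `(1 - x²)^(d/2 - 1)` of `ν_d`. -/
def ultrasphericalWeight (d : ℕ) (x : ℝ) : ℝ := (1 - x ^ 2) ^ ((d : ℝ) / 2 - 1)

lemma one_sub_sq_pos {x : ℝ} (hx : x ∈ Ioo (-1 : ℝ) 1) : 0 < 1 - x ^ 2 := by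
  nlinarith [hx.1, hx.2]

lemma one_sub_sq_nonneg {x : ℝ} (hx : x ∈ Icc (-1 : ℝ) 1) : 0 ≤ 1 - x ^ 2 := by
  nlinarith [hx.1, hx.2]

lemma ultrasphericalWeight_pos {x : ℝ} (hx : x ∈ Ioo (-1 : ℝ) 1) : 0 < ultrasphericalWeight d x :=
  rpow_pos_of_pos (one_sub_sq_pos hx) _

lemma intervalIntegral_rpow_mul_one_sub_rpow {a b : ℝ} (ha : 0 < a) (hb : 0 < b) :
    ∫ x in (0 : ℝ)..1, x ^ (a - 1) * (1 - x) ^ (b - 1) = ProbabilityTheory.beta a b := by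
  rw [ProbabilityTheory.beta_eq_betaIntegralReal a b ha hb, Complex.betaIntegral,
    ← Complex.ofReal_re (∫ x in (0 : ℝ)..1, _), ← intervalIntegral.integral_ofReal]
  congr 1
  refine intervalIntegral.integral_congr fun x hx => ?_
  rw [uIcc_of_le zero_le_one] at hx
  push_cast [Complex.ofReal_cpow hx.1, Complex.ofReal_cpow (sub_nonneg.2 hx.2)]
  rfl

/-- Legendre's duplication formula in terms of the Beta function. -/
lemma two_rpow_mul_beta_self {s : ℝ} (hs : 0 < s) :
    2 ^ (2 * s - 1) * ProbabilityTheory.beta s s = √π * Gamma s / Gamma (s + 1 / 2) := by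
  have hG : 0 < Gamma (2 * s) := Gamma_pos_of_pos (by positivity)
  have hG' : 0 < Gamma (s + 1 / 2) := Gamma_pos_of_pos (by positivity)
  have h2 : (2 : ℝ) ^ (2 * s - 1) * 2 ^ (1 - 2 * s) = 1 := by
    rw [← rpow_add two_pos]; norm_num
  rw [ProbabilityTheory.beta, ← two_mul, eq_div_iff hG'.ne', ← mul_div_assoc, div_mul_eq_mul_div,
    div_eq_iff hG.ne']
  linear_combination (2 ^ (2 * s - 1) * Gamma s) * Gamma_mul_Gamma_add_half s +
    (Gamma s * Gamma (2 * s) * √π) * h2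

section NeZero

variable [NeZero d]

lemma Zd_pos : 0 < Zd d := by
  have hd : (0 : ℝ) < d := Nat.cast_pos.2 (NeZero.pos d)
  exact div_pos (mul_pos (sqrt_pos.2 pi_pos) (Gamma_pos_of_pos (by positivity)))
    (Gamma_pos_of_pos (by positivity))

lemma intervalIntegral_ultrasphericalWeight :
    ∫ x in (-1 : ℝ)..1, ultrasphericalWeight d x = Zd d := by
  have hd : (0 : ℝ) < d / 2 := half_pos (Nat.cast_pos.2 (NeZero.pos d))
  have h4 : (2 : ℝ) * 4 ^ ((d : ℝ) / 2 - 1) = 2 ^ (2 * ((d : ℝ) / 2) - 1) := by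
    rw [show (4 : ℝ) = 2 ^ (2 : ℝ) by norm_num, ← rpow_mul zero_le_two]
    nth_rw 1 [← rpow_one 2]
    rw [← rpow_add two_pos]
    ring_nf
  have hsubst : ∀ t ∈ Icc (0 : ℝ) 1, ultrasphericalWeight d (2 * t - 1) =
      4 ^ ((d : ℝ) / 2 - 1) * (t ^ ((d : ℝ) / 2 - 1) * (1 - t) ^ ((d : ℝ) / 2 - 1)) := by
    intro t ht
    have ht' : 0 ≤ 1 - t := sub_nonneg.2 ht.2
    rw [← mul_rpow ht.1 ht', ← mul_rpow zero_le_four (mul_nonneg ht.1 ht'),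
      ultrasphericalWeight]
    ring_nf
  calc ∫ x in (-1 : ℝ)..1, ultrasphericalWeight d x
      = 2 * ∫ t in (0 : ℝ)..1, ultrasphericalWeight d (2 * t - 1) := by
        rw [intervalIntegral.integral_comp_mul_sub _ two_ne_zero]
        simp only [smul_eq_mul]
        norm_num
        ring
    _ = 2 * 4 ^ ((d : ℝ) / 2 - 1) * ProbabilityTheory.beta (d / 2) (d / 2) := by
        rw [intervalIntegral.integral_congr (uIcc_of_le (zero_le_one' ℝ) ▸ hsubst),
          intervalIntegral.integral_const_mul, intervalIntegral_rpow_mul_one_sub_rpow hd hd,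
          mul_assoc]
    _ = Zd d := by
        rw [h4, two_rpow_mul_beta_self hd, Zd, add_div]

lemma intervalIntegrable_ultrasphericalWeight :
    IntervalIntegrable (ultrasphericalWeight d) volume (-1) 1 :=
  intervalIntegral.intervalIntegrable_of_integral_ne_zero
    (intervalIntegral_ultrasphericalWeight.trans_ne Zd_pos.ne')

lemma integral_nuMeas (F : ℝ → ℝ) :
    ∫ x, F x ∂(nuMeas d) = (Zd d)⁻¹ * ∫ x in (-1 : ℝ)..1, F x * ultrasphericalWeight d x := by
  rw [nuMeas, integral_withDensity_eq_integral_toReal_smul (by fun_prop)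
      (ae_of_all _ fun _ => ENNReal.ofReal_lt_top),
    intervalIntegral.integral_of_le (by norm_num), integral_Ioc_eq_integral_Ioo,
    ← integral_const_mul]
  refine setIntegral_congr_fun measurableSet_Ioo fun x hx => ?_
  have hw : 0 < ultrasphericalWeight d x := ultrasphericalWeight_pos hx
  have hZ : 0 < Zd d := Zd_pos
  rw [← ultrasphericalWeight, ENNReal.toReal_ofReal (by positivity), smul_eq_mul]
  ring

instance isProbabilityMeasure_nuMeas : IsProbabilityMeasure (nuMeas d) := by
  have hint : IntegrableOn (fun x => ultrasphericalWeight d x / Zd d) (Ioo (-1) 1) :=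
    (intervalIntegrable_iff_integrableOn_Ioo_of_le (by norm_num)).1
      (intervalIntegrable_ultrasphericalWeight.div_const (Zd d))
  have hnonneg : ∀ᵐ x ∂(volume.restrict (Ioo (-1 : ℝ) 1)),
      0 ≤ ultrasphericalWeight d x / Zd d := by
    filter_upwards [ae_restrict_mem measurableSet_Ioo] with x hx
    exact div_nonneg (ultrasphericalWeight_pos hx).le Zd_pos.le
  refine ⟨?_⟩
  rw [nuMeas, withDensity_apply _ MeasurableSet.univ, Measure.restrict_univ]
  change ∫⁻ x in Ioo (-1 : ℝ) 1, ENNReal.ofReal (ultrasphericalWeight d x / Zd d) = 1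
  rw [← ofReal_integral_eq_lintegral_ofReal hint hnonneg, ← integral_Ioc_eq_integral_Ioo,
    ← intervalIntegral.integral_of_le (by norm_num), intervalIntegral.integral_div,
    intervalIntegral_ultrasphericalWeight, div_self Zd_pos.ne', ENNReal.ofReal_one]

end NeZero

lemma ae_mem_Ioo_nuMeas : ∀ᵐ x ∂(nuMeas d), x ∈ Ioo (-1 : ℝ) 1 :=
  (withDensity_absolutelyContinuous _ _).ae_le (ae_restrict_mem measurableSet_Ioo)

lemma ae_mem_Icc_nuMeas : ∀ᵐ x ∂(nuMeas d), x ∈ Icc (-1 : ℝ) 1 :=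
  ae_mem_Ioo_nuMeas.mono fun _ hx => Ioo_subset_Icc_self hx

lemma aestronglyMeasurable_nuMeas_of_continuousOn {F : ℝ → ℝ} (hF : ContinuousOn F (Icc (-1) 1)) :
    AEStronglyMeasurable F (nuMeas d) :=
  ((hF.mono Ioo_subset_Icc_self).aestronglyMeasurable measurableSet_Ioo).mono_ac
    (withDensity_absolutelyContinuous _ _)

lemma ae_restrict_Icc_of_ae_nuMeas [NeZero d] {p : ℝ → Prop} (h : ∀ᵐ x ∂(nuMeas d), p x) :
    ∀ᵐ x ∂(volume.restrict (Icc (-1 : ℝ) 1)), p x := by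
  rw [← restrict_Ioo_eq_restrict_Icc]
  refine (withDensity_absolutelyContinuous' (by fun_prop) ?_).ae_le h
  filter_upwards [ae_restrict_mem measurableSet_Ioo] with x hx
  exact (ENNReal.ofReal_pos.2 (div_pos (ultrasphericalWeight_pos hx) Zd_pos)).ne'

lemma exists_eventually_forall_abs_le_of_tendsto {ι X : Type*} [TopologicalSpace X] {l : Filter ι}
    {K : Set X} (hK : IsCompact K) {F : ι → X → ℝ} {G : X → ℝ}
    (hF : ∀ x ∈ K, Tendsto (Function.uncurry F) (l ×ˢ 𝓝[K] x) (𝓝 (G x))) :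
    ∃ C, ∀ᶠ i in l, ∀ x ∈ K, |F i x| ≤ C := by
  refine hK.induction_on (p := fun s => ∃ C, ∀ᶠ i in l, ∀ x ∈ s, |F i x| ≤ C) ⟨0, by simp⟩
    (fun s t hst ⟨C, hC⟩ => ⟨C, hC.mono fun i hi x hx => hi x (hst hx)⟩) ?_ fun x hx => ?_
  · rintro s t ⟨C, hC⟩ ⟨C', hC'⟩
    refine ⟨max C C', ?_⟩
    filter_upwards [hC, hC'] with i hi hi' x hx
    exact hx.elim (fun h => le_max_of_le_left (hi x h)) fun h => le_max_of_le_right (hi' x h)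
  · obtain ⟨p, hp, q, hq, hpq⟩ :=
      eventually_prod_iff.1 ((hF x hx).abs.eventually_le_const (lt_add_one |G x|))
    exact ⟨_, hq, _, hp.mono fun i hi y hy => hpq hi hy⟩

section NeZero

variable [NeZero d]

lemma integrable_nuMeas_of_continuousOn {F : ℝ → ℝ} (hF : ContinuousOn F (Icc (-1) 1)) :
    Integrable F (nuMeas d) := by
  obtain ⟨C, hC⟩ := isCompact_Icc.exists_bound_of_continuousOn hF
  exact .of_bound (aestronglyMeasurable_nuMeas_of_continuousOn hF) C (ae_mem_Icc_nuMeas.mono hC)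

lemma eqOn_zero_of_integral_nuMeas_eq_zero {F : ℝ → ℝ} (hF : ContinuousOn F (Icc (-1) 1))
    (h0 : ∀ x ∈ Icc (-1 : ℝ) 1, 0 ≤ F x) (h : ∫ x, F x ∂(nuMeas d) = 0) :
    EqOn F 0 (Icc (-1) 1) :=
  Measure.eqOn_Icc_of_ae_eq _ (by norm_num)
    (ae_restrict_Icc_of_ae_nuMeas ((integral_eq_zero_iff_of_nonneg_ae (ae_mem_Icc_nuMeas.mono h0)
      (integrable_nuMeas_of_continuousOn hF)).1 h)) hF continuousOn_const

lemma tendsto_integral_nuMeas {ι : Type*} {l : Filter ι} [l.IsCountablyGenerated]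
    {F : ι → ℝ → ℝ} {G : ℝ → ℝ} (hF : ∀ᶠ i in l, ContinuousOn (F i) (Icc (-1) 1))
    (hFG : ∀ x ∈ Icc (-1 : ℝ) 1,
      Tendsto (Function.uncurry F) (l ×ˢ 𝓝[Icc (-1) 1] x) (𝓝 (G x))) :
    Tendsto (fun i => ∫ x, F i x ∂(nuMeas d)) l (𝓝 (∫ x, G x ∂(nuMeas d))) := by
  obtain ⟨C, hC⟩ := exists_eventually_forall_abs_le_of_tendsto isCompact_Icc hFG
  refine tendsto_integral_filter_of_dominated_convergence (fun _ => C)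
    (hF.mono fun i hi => aestronglyMeasurable_nuMeas_of_continuousOn hi)
    (hC.mono fun i hi => ae_mem_Icc_nuMeas.mono hi) (integrable_const C)
    (ae_mem_Icc_nuMeas.mono fun x hx => ?_)
  exact (hFG x hx).comp (tendsto_id.prodMk (tendsto_const_nhdsWithin hx))

lemma hasDerivAt_integral_nuMeas {F F' : ℝ → ℝ → ℝ} {t : ℝ}
    (hF : ∀ᶠ s in 𝓝 t, ContinuousOn (F s) (Icc (-1) 1))
    (hF' : ∀ x ∈ Icc (-1 : ℝ) 1, ContinuousAt (Function.uncurry F') (t, x))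
    (h : ∀ᶠ s in 𝓝 t, ∀ x ∈ Icc (-1 : ℝ) 1, HasDerivAt (fun s => F s x) (F' s x) s) :
    HasDerivAt (fun s => ∫ x, F s x ∂(nuMeas d)) (∫ x, F' t x ∂(nuMeas d)) t := by
  have hF'c : ContinuousOn (F' t) (Icc (-1) 1) := fun x hx =>
    ((hF' x hx).comp (f := fun y => (t, y)) (by fun_prop)).continuousWithinAt
  obtain ⟨C, hC⟩ := exists_eventually_forall_abs_le_of_tendsto (l := 𝓝 t) isCompact_Icc
    fun x hx => (hF' x hx).mono_left
      ((Filter.prod_mono_right _ nhdsWithin_le_nhds).trans_eq nhds_prod_eq.symm)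
  exact (hasDerivAt_integral_of_dominated_loc_of_deriv_le (bound := fun _ => C) (h.and hC)
    (hF.mono fun s hs => aestronglyMeasurable_nuMeas_of_continuousOn hs)
    (integrable_nuMeas_of_continuousOn hF.self_of_nhds)
    (aestronglyMeasurable_nuMeas_of_continuousOn hF'c)
    (ae_mem_Icc_nuMeas.mono fun x hx s hs => hs.2 x hx)
    (integrable_const C) (ae_mem_Icc_nuMeas.mono fun x hx s hs => hs.1 x hx)).2

/-- Integration by parts: the integrand is the derivative of `(1 - x²)^(d/2) A(x)`, divided by the
weight. -/
lemma integral_one_sub_sq_mul_deriv_sub_nuMeas {A A' : ℝ → ℝ} (hA : ContinuousOn A (Icc (-1) 1))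
    (hA' : ContinuousOn A' (Icc (-1) 1)) (h : ∀ x ∈ Ioo (-1 : ℝ) 1, HasDerivAt A (A' x) x) :
    ∫ x, ((1 - x ^ 2) * A' x - d * x * A x) ∂(nuMeas d) = 0 := by
  have hd : (0 : ℝ) < d / 2 := half_pos (Nat.cast_pos.2 (NeZero.pos d))
  have hderiv : ∀ x ∈ Ioo (-1 : ℝ) 1, HasDerivAt (fun x => (1 - x ^ 2) ^ ((d : ℝ) / 2) * A x)
      (((1 - x ^ 2) * A' x - d * x * A x) * ultrasphericalWeight d x) x := by
    intro x hx
    have hν : HasDerivAt (fun x : ℝ => 1 - x ^ 2) (-(2 * x)) x := by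
      simpa using (hasDerivAt_pow 2 x).const_sub 1
    refine ((hν.rpow_const (p := (d : ℝ) / 2) (.inl (one_sub_sq_pos hx).ne')).mul
      (h x hx)).congr_deriv ?_
    have hpow : (1 - x ^ 2) ^ ((d : ℝ) / 2) = (1 - x ^ 2) * ultrasphericalWeight d x := by
      rw [ultrasphericalWeight, mul_comm, ← rpow_add_one (one_sub_sq_pos hx).ne', sub_add_cancel]
    rw [hpow, ultrasphericalWeight]
    ring
  rw [integral_nuMeas, intervalIntegral.integral_eq_sub_of_hasDerivAt_of_le (by norm_num)
    ((Continuous.rpow_const (by fun_prop) fun x => .inr hd.le).continuousOn.mul hA) hderiv]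
  · norm_num [zero_rpow hd.ne']
  · refine intervalIntegrable_ultrasphericalWeight.continuousOn_mul ?_
    rw [uIcc_of_le (by norm_num)]
    fun_prop

end NeZero

/-- The generator `L P = (1 - x²) P'' - d x P'` of the ultraspherical semigroup on polynomials. -/
def ultrasphericalOp (d : ℕ) : Module.End ℝ ℝ[X] :=
  LinearMap.mulLeft ℝ (1 - X ^ 2) ∘ₗ derivative ∘ₗ derivative -
    (d : ℝ) • (LinearMap.mulLeft ℝ X ∘ₗ derivative)

/-- The eigenvalues `k (k + d - 1)` of `-L`. -/
def ultrasphericalEigenvalue (d k : ℕ) : ℝ := k * (k + d - 1)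

lemma eval_ultrasphericalOp (P : ℝ[X]) (x : ℝ) : (ultrasphericalOp d P).eval x =
    (1 - x ^ 2) * (derivative (derivative P)).eval x - d * x * (derivative P).eval x := by
  simp [ultrasphericalOp, mul_assoc]

lemma eval_derivative_ultrasphericalOp (P : ℝ[X]) (x : ℝ) :
    (derivative (ultrasphericalOp d P)).eval x =
      (1 - x ^ 2) * (derivative (derivative (derivative P))).eval x -
        (d + 2) * x * (derivative (derivative P)).eval x - d * (derivative P).eval x := by
  simp [ultrasphericalOp]
  ring

lemma ultrasphericalOp_X_pow (n : ℕ) : ultrasphericalOp d (X ^ n) =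
    ((n : ℝ) * (n - 1 : ℕ)) • X ^ (n - 2) - ultrasphericalEigenvalue d n • X ^ n := by
  refine Polynomial.funext fun x => ?_
  rw [eval_ultrasphericalOp]
  rcases n with _ | _ | n
  · simp [ultrasphericalEigenvalue]
  · simp [ultrasphericalEigenvalue]
  · simp [ultrasphericalEigenvalue]
    ring

@[simp]
lemma ultrasphericalEigenvalue_zero : ultrasphericalEigenvalue d 0 = 0 := by
  simp [ultrasphericalEigenvalue]

lemma iSup_eigenspace_le_map_sub_algebraMap {K V ι : Type*} [Field K] [AddCommGroup V] [Module K V]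
    {T : Module.End K V} {μ : K} {f : ι → K} {s : Set ι} (hf : ∀ i ∈ s, f i ≠ μ) :
    ⨆ i ∈ s, T.eigenspace (f i) ≤ (⨆ i ∈ s, T.eigenspace (f i)).map (T - algebraMap K _ μ) := by
  refine iSup₂_le fun i hi e he => ⟨(f i - μ)⁻¹ • e,
    Submodule.smul_mem _ _ (le_iSup₂ (f := fun i _ => T.eigenspace (f i)) i hi he), ?_⟩
  rw [map_smul, LinearMap.sub_apply, Module.End.mem_eigenspace_iff.1 he,
    Module.algebraMap_end_apply, ← sub_smul, inv_smul_smul₀ (sub_ne_zero.2 (hf i hi))]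

section NeZero

variable [NeZero d]

lemma strictMono_ultrasphericalEigenvalue : StrictMono (ultrasphericalEigenvalue d) := by
  have hd : (1 : ℝ) ≤ d := Nat.one_le_cast.2 (NeZero.one_le)
  refine strictMono_nat_of_lt_succ fun k => ?_
  rw [ultrasphericalEigenvalue, ultrasphericalEigenvalue]
  push_cast
  nlinarith [k.cast_nonneg (α := ℝ)]

lemma X_pow_mem_iSup_eigenspace_ultrasphericalOp (n : ℕ) : (X ^ n : ℝ[X]) ∈
    ⨆ k ∈ Iic n, (ultrasphericalOp d).eigenspace (-ultrasphericalEigenvalue d k) := by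
  induction n using Nat.strong_induction_on with
  | _ n ih =>
  have hle : ∀ {m}, m < n →
      ⨆ k ∈ Iic m, (ultrasphericalOp d).eigenspace (-ultrasphericalEigenvalue d k) ≤
        ⨆ k ∈ Iio n, (ultrasphericalOp d).eigenspace (-ultrasphericalEigenvalue d k) :=
    fun hm => biSup_mono fun _ hk => lt_of_le_of_lt hk hm
  have hlower : ((n : ℝ) * (n - 1 : ℕ)) • (X : ℝ[X]) ^ (n - 2) ∈
      ⨆ k ∈ Iio n, (ultrasphericalOp d).eigenspace (-ultrasphericalEigenvalue d k) := by
    rcases n with _ | _ | n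
    · simp
    · simp
    · exact Submodule.smul_mem _ _ (hle (by omega) (ih n (by omega)))
  obtain ⟨r, hr, hTr⟩ := Submodule.mem_map.1 (iSup_eigenspace_le_map_sub_algebraMap
    (fun k hk => (neg_lt_neg (strictMono_ultrasphericalEigenvalue hk)).ne') hlower)
  have hX : X ^ n - r ∈ (ultrasphericalOp d).eigenspace (-ultrasphericalEigenvalue d n) := by
    rw [LinearMap.sub_apply, Module.algebraMap_end_apply, sub_eq_iff_eq_add] at hTr
    rw [Module.End.mem_eigenspace_iff, map_sub, ultrasphericalOp_X_pow, hTr]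
    module
  rw [← sub_add_cancel (X ^ n) r]
  exact Submodule.add_mem _ (le_iSup₂ (f := fun k _ => (ultrasphericalOp d).eigenspace
    (-ultrasphericalEigenvalue d k)) n self_mem_Iic hX)
    (SetLike.le_def.1 (biSup_mono Iio_subset_Iic_self) hr)

lemma iSup_eigenspace_ultrasphericalOp :
    ⨆ k, (ultrasphericalOp d).eigenspace (-ultrasphericalEigenvalue d k) = ⊤ := by
  rw [eq_top_iff, ← (Polynomial.basisMonomials ℝ).span_eq, Submodule.span_le]
  rintro _ ⟨n, rfl⟩
  simpa only [coe_basisMonomials, SetLike.mem_coe, monomial_one_right_eq_X_pow] using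
    SetLike.le_def.1 (iSup_mono fun _ => iSup_const_le)
      (X_pow_mem_iSup_eigenspace_ultrasphericalOp n)

lemma integral_mul_ultrasphericalOp_nuMeas {A A' : ℝ → ℝ} (hA : ContinuousOn A (Icc (-1) 1))
    (hA' : ContinuousOn A' (Icc (-1) 1)) (h : ∀ x ∈ Ioo (-1 : ℝ) 1, HasDerivAt A (A' x) x)
    (P : ℝ[X]) :
    ∫ x, A x * (ultrasphericalOp d P).eval x ∂(nuMeas d) =
      -∫ x, A' x * (derivative P).eval x * (1 - x ^ 2) ∂(nuMeas d) := by
  have hibp := integral_one_sub_sq_mul_deriv_sub_nuMeas (d := d)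
    (A := fun x => A x * (derivative P).eval x)
    (A' := fun x => A' x * (derivative P).eval x + A x * (derivative (derivative P)).eval x)
    (by fun_prop) (by fun_prop) fun x hx => (h x hx).mul ((derivative P).hasDerivAt x)
  rw [← sub_eq_zero, sub_neg_eq_add, ← integral_add, ← hibp]
  · refine integral_congr_ae (ae_of_all _ fun x => ?_)
    simp only [eval_ultrasphericalOp]
    ring
  all_goals exact integrable_nuMeas_of_continuousOn (by fun_prop)

lemma integral_eval_ultrasphericalOp_nuMeas (P : ℝ[X]) :
    ∫ x, (ultrasphericalOp d P).eval x ∂(nuMeas d) = 0 := by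
  simpa using integral_mul_ultrasphericalOp_nuMeas (d := d) (A := fun _ => 1) (A' := fun _ => 0)
    continuousOn_const continuousOn_const (fun x _ => hasDerivAt_const x 1) P

lemma integral_eval_nuMeas_of_mem_eigenspace {k : ℕ} (hk : k ≠ 0) {P : ℝ[X]}
    (hP : P ∈ (ultrasphericalOp d).eigenspace (-ultrasphericalEigenvalue d k)) :
    ∫ x, P.eval x ∂(nuMeas d) = 0 := by
  have hLP := integral_eval_ultrasphericalOp_nuMeas (d := d) P
  have hne : ultrasphericalEigenvalue d k ≠ 0 := fun h =>
    hk (strictMono_ultrasphericalEigenvalue.injective (h.trans ultrasphericalEigenvalue_zero.symm))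
  simpa [Module.End.mem_eigenspace_iff.1 hP, integral_const_mul, hne, integral_neg] using hLP

lemma derivative_eq_zero_of_ultrasphericalOp_eq_zero {P : ℝ[X]} (hP : ultrasphericalOp d P = 0) :
    derivative P = 0 := by
  have hgreen := integral_mul_ultrasphericalOp_nuMeas (d := d) P.continuous.continuousOn
    (derivative P).continuous.continuousOn (fun x _ => P.hasDerivAt x) P
  simp only [hP, eval_zero, mul_zero, integral_zero, zero_eq_neg] at hgreen
  have hzero := eqOn_zero_of_integral_nuMeas_eq_zero (by fun_prop)
    (fun x hx => mul_nonneg (mul_self_nonneg _) (one_sub_sq_nonneg hx)) hgreen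
  refine eq_zero_of_infinite_isRoot _ ((Ioo_infinite (by norm_num : (-1 : ℝ) < 1)).mono ?_)
  intro x hx
  simpa [(one_sub_sq_pos hx).ne'] using hzero (Ioo_subset_Icc_self hx)

lemma eval_eq_integral_nuMeas_of_ultrasphericalOp_eq_zero {P : ℝ[X]}
    (hP : ultrasphericalOp d P = 0) (x : ℝ) : P.eval x = ∫ y, P.eval y ∂(nuMeas d) := by
  rw [eq_C_of_derivative_eq_zero (derivative_eq_zero_of_ultrasphericalOp_eq_zero hP)]
  simp

end NeZero

/-- The generalized Fisher information `∫ g^a g'² (1 - x²) dν_d`, where `g'` stands for the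
derivative of `g`; the exponent `a = q - 2` corresponds to the entropy `∫ g^q dν_d`. -/
def fisherInfo (d : ℕ) (a : ℝ) (g g' : ℝ → ℝ) : ℝ :=
  ∫ x, g x ^ a * g' x ^ 2 * (1 - x ^ 2) ∂(nuMeas d)

lemma fisherInfo_nonneg {a : ℝ} {g g' : ℝ → ℝ} (hg : ∀ x ∈ Icc (-1 : ℝ) 1, 0 ≤ g x) :
    0 ≤ fisherInfo d a g g' :=
  integral_nonneg_of_ae <| ae_mem_Icc_nuMeas.mono fun x hx =>
    mul_nonneg (mul_nonneg (rpow_nonneg (hg x hx) a) (sq_nonneg _)) (one_sub_sq_nonneg hx)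

/-- The choice `c = a d / (d + 2)` cancels the cross term `x u'³` in `fisherInfo_dissipation`. -/
lemma dissipation_quadraticForm_nonneg {d a c : ℝ} (hd : 1 ≤ d) (ha : -1 ≤ a) (ha0 : a ≤ 0)
    (hc : c = a * d / (d + 2)) (z r : ℝ) :
    0 ≤ 2 * z ^ 2 + (a + 3 * c) * z * r + c * (a - 1) * r ^ 2 := by
  have hbracket : 0 ≤ a * (8 * d ^ 2 + 4) + 8 * d ^ 2 + 16 * d := by nlinarith
  have hdiscrim : 8 * (c * (a - 1)) - (a + 3 * c) ^ 2 =
      -a * (a * (8 * d ^ 2 + 4) + 8 * d ^ 2 + 16 * d) / (d + 2) ^ 2 := by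
    rw [hc]
    field_simp
    ring
  have hdiscrim_nonneg : 0 ≤ 8 * (c * (a - 1)) - (a + 3 * c) ^ 2 :=
    hdiscrim ▸ div_nonneg (mul_nonneg (neg_nonneg.2 ha0) hbracket) (sq_nonneg _)
  nlinarith [sq_nonneg (4 * z + (a + 3 * c) * r), mul_nonneg hdiscrim_nonneg (sq_nonneg r)]

lemma dissipation_integrand_eq {d a c x u u₁ u₂ u₃ : ℝ} (hu : 0 < u) (hc : c * (d + 2) = a * d) :
    (a * u ^ (a - 1) * ((1 - x ^ 2) * u₂ - d * x * u₁) * u₁ ^ 2 +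
        u ^ a * (2 * u₁ * ((1 - x ^ 2) * u₃ - (d + 2) * x * u₂ - d * u₁))) * (1 - x ^ 2) +
      2 * d * (u ^ a * u₁ ^ 2 * (1 - x ^ 2)) +
      u ^ a * (1 - x ^ 2) ^ 2 *
        (2 * u₂ ^ 2 + (a + 3 * c) * u₂ * (u₁ ^ 2 / u) + c * (a - 1) * (u₁ ^ 2 / u) ^ 2) =
    (1 - x ^ 2) * (-(2 * x) * (2 * u ^ a * u₁ * u₂ + c * u ^ (a - 1) * u₁ ^ 3) +
        (1 - x ^ 2) * (2 * (a * u ^ (a - 1) * u₁ * (u₁ * u₂) + u ^ a * (u₂ ^ 2 + u₁ * u₃)) +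
          c * ((a - 1) * u ^ (a - 2) * u₁ * u₁ ^ 3 + u ^ (a - 1) * (3 * u₁ ^ 2 * u₂)))) -
      d * x * ((1 - x ^ 2) * (2 * u ^ a * u₁ * u₂ + c * u ^ (a - 1) * u₁ ^ 3)) := by
  rw [show a - 2 = a - 1 - 1 by ring, rpow_sub_one hu.ne' (a - 1), rpow_sub_one hu.ne' a]
  field_simp
  linear_combination (u * (1 - x ^ 2) * x * u₁ ^ 3) * hc

lemma hasDerivAt_dissipation_flux {a c x : ℝ} {u u₁ u₂ : ℝ → ℝ} {u₃ : ℝ} (hpos : 0 < u x)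
    (hu : HasDerivAt u (u₁ x) x) (hu₁ : HasDerivAt u₁ (u₂ x) x) (hu₂ : HasDerivAt u₂ u₃ x) :
    HasDerivAt
      (fun x => (1 - x ^ 2) * (2 * u x ^ a * u₁ x * u₂ x + c * u x ^ (a - 1) * u₁ x ^ 3))
      (-(2 * x) * (2 * u x ^ a * u₁ x * u₂ x + c * u x ^ (a - 1) * u₁ x ^ 3) +
        (1 - x ^ 2) * (2 * (a * u x ^ (a - 1) * u₁ x * (u₁ x * u₂ x) +
            u x ^ a * (u₂ x ^ 2 + u₁ x * u₃)) +
          c * ((a - 1) * u x ^ (a - 2) * u₁ x * u₁ x ^ 3 +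
            u x ^ (a - 1) * (3 * u₁ x ^ 2 * u₂ x)))) x := by
  have hrpow : ∀ s : ℝ, HasDerivAt (fun x => u x ^ s) (u₁ x * s * u x ^ (s - 1)) x := fun s =>
    hu.rpow_const (.inl hpos.ne')
  refine (((hasDerivAt_pow 2 x).const_sub 1).mul
    (((((hrpow a).const_mul 2).mul hu₁).mul hu₂).add
      (((hrpow (a - 1)).const_mul c).mul (hu₁.pow 3)))).congr_deriv ?_
  simp only [Pi.mul_apply, Pi.add_apply, Pi.pow_apply]
  rw [show a - 1 - 1 = a - 2 by ring]
  push_cast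
  ring

lemma hasDerivAt_max_zero_pow (n : ℕ) (x : ℝ) :
    HasDerivAt (fun x : ℝ => max x 0 ^ (n + 2)) ((n + 2) * max x 0 ^ (n + 1)) x := by
  have hne : ∀ y : ℝ, y ≠ 0 →
      HasDerivAt (fun x : ℝ => max x 0 ^ (n + 2)) ((n + 2) * max y 0 ^ (n + 1)) y := by
    intro y hy
    rcases hy.lt_or_gt with hy | hy
    · rw [max_eq_right hy.le, zero_pow n.succ_ne_zero, mul_zero]
      refine (hasDerivAt_const y (0 : ℝ)).congr_of_eventuallyEq ?_
      filter_upwards [Iio_mem_nhds hy] with z hz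
      simp [max_eq_right (le_of_lt (mem_Iio.1 hz))]
    · rw [max_eq_left hy.le]
      refine ((hasDerivAt_pow (n + 2) y).congr_of_eventuallyEq ?_).congr_deriv (by simp)
      filter_upwards [Ioi_mem_nhds hy] with z hz
      rw [max_eq_left (le_of_lt (mem_Ioi.1 hz))]
  rcases eq_or_ne x 0 with rfl | hx
  · exact hasDerivAt_of_hasDerivAt_of_ne (g := fun y => (n + 2) * max y 0 ^ (n + 1)) hne
      (by fun_prop) (by fun_prop)
  · exact hne x hx

/-- The solution at time `t` of the heat equation `∂ₜ u = L u` whose initial datum has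
`(-ultrasphericalEigenvalue d k)`-eigencomponents `h k`. -/
def heatFlow (d : ℕ) (h : ℕ →₀ ℝ[X]) (t : ℝ) : ℝ[X] :=
  h.sum fun k g => exp (-(ultrasphericalEigenvalue d k * t)) • g

section HeatFlow

variable {h : ℕ →₀ ℝ[X]}

lemma heatFlow_zero : heatFlow d h 0 = h.sum fun _ g => g := by
  simp [heatFlow]

lemma continuous_eval_map_heatFlow (T : Module.End ℝ ℝ[X]) :
    Continuous fun z : ℝ × ℝ => (T (heatFlow d h z.1)).eval z.2 := by
  simp only [heatFlow, Finsupp.sum, map_sum, map_smul, eval_finsetSum, eval_smul]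
  fun_prop

lemma hasDerivAt_map_heatFlow
    (hh : ∀ k, h k ∈ (ultrasphericalOp d).eigenspace (-ultrasphericalEigenvalue d k))
    (φ : ℝ[X] →ₗ[ℝ] ℝ) (t : ℝ) :
    HasDerivAt (fun s => φ (heatFlow d h s)) (φ (ultrasphericalOp d (heatFlow d h t))) t := by
  simp only [heatFlow, Finsupp.sum, map_sum, map_smul, smul_eq_mul]
  refine HasDerivAt.fun_sum fun k _ => ?_
  rw [Module.End.mem_eigenspace_iff.1 (hh k), map_smul, smul_eq_mul, ← mul_assoc]
  refine HasDerivAt.mul_const ?_ _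
  simpa using (((hasDerivAt_id t).const_mul (ultrasphericalEigenvalue d k)).fun_neg).exp

lemma eventually_forall_eval_heatFlow_mem {s : Set ℝ} (hs : IsOpen s) {t : ℝ}
    (ht : ∀ x ∈ Icc (-1 : ℝ) 1, (heatFlow d h t).eval x ∈ s) :
    ∀ᶠ r in 𝓝 t, ∀ x ∈ Icc (-1 : ℝ) 1, (heatFlow d h r).eval x ∈ s :=
  isCompact_Icc.eventually_forall_of_forall_eventually fun x hx =>
    ((continuous_eval_map_heatFlow 1).continuousAt (x := (t, x))).eventually
      (hs.mem_nhds (ht x hx))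

variable [NeZero d]

lemma integral_eval_heatFlow_zero
    (hh : ∀ k, h k ∈ (ultrasphericalOp d).eigenspace (-ultrasphericalEigenvalue d k)) :
    ∫ x, (heatFlow d h 0).eval x ∂(nuMeas d) = ∫ x, (h 0).eval x ∂(nuMeas d) := by
  simp only [heatFlow_zero, Finsupp.sum, eval_finsetSum]
  rw [integral_finsetSum _ fun k _ => integrable_nuMeas_of_continuousOn
    (h k).continuous.continuousOn]
  refine Finset.sum_eq_single 0
    (fun k _ hk => integral_eval_nuMeas_of_mem_eigenspace hk (hh k)) fun h0 => ?_
  simp [Finsupp.notMem_support_iff.1 h0]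

lemma tendsto_eval_heatFlow_atTop
    (hh : ∀ k, h k ∈ (ultrasphericalOp d).eigenspace (-ultrasphericalEigenvalue d k)) (x : ℝ) :
    Tendsto (fun z : ℝ × ℝ => (heatFlow d h z.1).eval z.2) (atTop ×ˢ 𝓝 x)
      (𝓝 (∫ y, (heatFlow d h 0).eval y ∂(nuMeas d))) := by
  have hterm : ∀ k ∈ h.support, Tendsto
      (fun z : ℝ × ℝ => exp (-(ultrasphericalEigenvalue d k * z.1)) * (h k).eval z.2)
      (atTop ×ˢ 𝓝 x) (𝓝 (if 0 = k then (h k).eval x else 0)) := by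
    intro k _
    have heval : Tendsto (fun z : ℝ × ℝ => (h k).eval z.2) (atTop ×ˢ 𝓝 x) (𝓝 ((h k).eval x)) :=
      ((h k).continuous.tendsto x).comp tendsto_snd
    split_ifs with hk
    · simpa [← hk] using heval
    · have hpos : 0 < ultrasphericalEigenvalue d k := by
        simpa using strictMono_ultrasphericalEigenvalue (d := d) (pos_of_ne_zero (Ne.symm hk))
      simpa using (tendsto_exp_neg_atTop_nhds_zero.comp
        (tendsto_fst.const_mul_atTop hpos)).mul heval
  have hL : ultrasphericalOp d (h 0) = 0 := by
    simpa using Module.End.mem_eigenspace_iff.1 (hh 0)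
  rw [integral_eval_heatFlow_zero hh, ← eval_eq_integral_nuMeas_of_ultrasphericalOp_eq_zero hL x]
  have hsum : (∑ k ∈ h.support, if 0 = k then (h k).eval x else 0) = (h 0).eval x := by
    rw [Finset.sum_ite_eq, ite_eq_left_iff]
    intro h0
    rw [Finsupp.notMem_support_iff.1 h0, eval_zero]
  simpa [heatFlow, Finsupp.sum, eval_finsetSum, hsum] using tendsto_finsetSum _ hterm

lemma hasDerivAt_integral_comp_heatFlow
    (hh : ∀ k, h k ∈ (ultrasphericalOp d).eigenspace (-ultrasphericalEigenvalue d k))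
    {φ φ' φ'' : ℝ → ℝ} {s : Set ℝ} (hs : IsOpen s) (hφ : ∀ y ∈ s, HasDerivAt φ (φ' y) y)
    (hφ' : ∀ y ∈ s, HasDerivAt φ' (φ'' y) y) (hφ'' : ContinuousOn φ'' s) {t : ℝ}
    (ht : ∀ x ∈ Icc (-1 : ℝ) 1, (heatFlow d h t).eval x ∈ s) :
    HasDerivAt (fun r => ∫ x, φ ((heatFlow d h r).eval x) ∂(nuMeas d))
      (-∫ x, φ'' ((heatFlow d h t).eval x) * (derivative (heatFlow d h t)).eval x ^ 2 *
        (1 - x ^ 2) ∂(nuMeas d)) t := by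
  have hmem := eventually_forall_eval_heatFlow_mem hs ht
  have hcφ : ContinuousOn φ s := fun y hy => (hφ y hy).continuousAt.continuousWithinAt
  have hcφ' : ContinuousOn φ' s := fun y hy => (hφ' y hy).continuousAt.continuousWithinAt
  have hgreen := integral_mul_ultrasphericalOp_nuMeas (d := d)
    (A := fun x => φ' ((heatFlow d h t).eval x))
    (A' := fun x => φ'' ((heatFlow d h t).eval x) * (derivative (heatFlow d h t)).eval x)
    (hcφ'.comp (heatFlow d h t).continuous.continuousOn ht)
    ((hφ''.comp (heatFlow d h t).continuous.continuousOn ht).mul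
      (derivative (heatFlow d h t)).continuous.continuousOn)
    (fun x hx => (hφ' _ (ht x (Ioo_subset_Icc_self hx))).comp x ((heatFlow d h t).hasDerivAt x))
    (heatFlow d h t)
  simp only [mul_assoc, sq] at hgreen ⊢
  rw [← hgreen]
  refine hasDerivAt_integral_nuMeas
    (F' := fun r x => φ' ((heatFlow d h r).eval x) *
      (ultrasphericalOp d (heatFlow d h r)).eval x)
    (hmem.mono fun r hr => hcφ.comp (heatFlow d h r).continuous.continuousOn hr) (fun x hx => ?_)
    (hmem.mono fun r hr x hx => (hφ _ (hr x hx)).comp r (hasDerivAt_map_heatFlow hh (leval x) r))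
  exact ((hφ' _ (ht x hx)).continuousAt.comp (x := (t, x)) (f := fun z : ℝ × ℝ =>
    (heatFlow d h z.1).eval z.2) (continuous_eval_map_heatFlow 1).continuousAt).mul
    (continuous_eval_map_heatFlow (ultrasphericalOp d)).continuousAt

/-- The minimum principle. The convex entropy `∫ max (m - u) 0 ^ 3` is nonincreasing along the
flow, so it stays zero. -/
lemma le_eval_heatFlow
    (hh : ∀ k, h k ∈ (ultrasphericalOp d).eigenspace (-ultrasphericalEigenvalue d k)) {m : ℝ}
    (hm : ∀ x ∈ Icc (-1 : ℝ) 1, m ≤ (heatFlow d h 0).eval x) {t : ℝ} (ht : 0 ≤ t) :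
    ∀ x ∈ Icc (-1 : ℝ) 1, m ≤ (heatFlow d h t).eval x := by
  have hcube : ∀ y, HasDerivAt (fun y => max (m - y) 0 ^ 3) (-(3 * max (m - y) 0 ^ 2)) y :=
    fun y => ((hasDerivAt_max_zero_pow 1 (m - y)).comp y
      ((hasDerivAt_id y).const_sub m)).congr_deriv (by norm_num)
  have hsq : ∀ y, HasDerivAt (fun y => -(3 * max (m - y) 0 ^ 2)) (6 * max (m - y) 0) y :=
    fun y => (((hasDerivAt_max_zero_pow 0 (m - y)).comp y
      ((hasDerivAt_id y).const_sub m)).const_mul 3).fun_neg.congr_deriv (by norm_num; ring)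
  have hanti : Antitone fun r => ∫ x, max (m - (heatFlow d h r).eval x) 0 ^ 3 ∂(nuMeas d) :=
    antitone_of_hasDerivAt_nonpos
      (fun r => hasDerivAt_integral_comp_heatFlow hh isOpen_univ (fun y _ => hcube y)
        (fun y _ => hsq y) (by fun_prop) (by simp))
      fun r => neg_nonpos.2 <| integral_nonneg_of_ae <| ae_mem_Icc_nuMeas.mono fun x hx =>
        mul_nonneg (by positivity) (one_sub_sq_nonneg hx)
  have hinit : ∫ x, max (m - (heatFlow d h 0).eval x) 0 ^ 3 ∂(nuMeas d) = 0 :=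
    integral_eq_zero_of_ae <| ae_mem_Icc_nuMeas.mono fun x hx => by simp [hm x hx]
  have hzero := eqOn_zero_of_integral_nuMeas_eq_zero (d := d)
    (F := fun x => max (m - (heatFlow d h t).eval x) 0 ^ 3) (by fun_prop)
    (fun x _ => by positivity)
    (((hanti ht).trans_eq hinit).antisymm (integral_nonneg fun x => by positivity))
  intro x hx
  simpa using hzero hx

/-- The integrated Bochner inequality: up to an exact derivative, the difference of the two sides is
minus a weighted integral of the quadratic form in `dissipation_quadraticForm_nonneg`. -/
lemma fisherInfo_dissipation {a : ℝ} (ha : -1 ≤ a) (ha0 : a ≤ 0) {u u₁ u₂ u₃ : ℝ → ℝ}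
    (hu : ∀ x, HasDerivAt u (u₁ x) x) (hu₁ : ∀ x, HasDerivAt u₁ (u₂ x) x)
    (hu₂ : ∀ x, HasDerivAt u₂ (u₃ x) x) (hu₃ : Continuous u₃)
    (hpos : ∀ x ∈ Icc (-1 : ℝ) 1, 0 < u x) :
    ∫ x, (a * u x ^ (a - 1) * ((1 - x ^ 2) * u₂ x - d * x * u₁ x) * u₁ x ^ 2 +
        u x ^ a * (2 * u₁ x * ((1 - x ^ 2) * u₃ x - (d + 2) * x * u₂ x - d * u₁ x))) *
        (1 - x ^ 2) ∂(nuMeas d) ≤ -(2 * d * fisherInfo d a u u₁) := by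
  set c : ℝ := a * d / (d + 2) with hc
  have hcd : c * (d + 2) = a * d := by rw [hc]; field_simp
  have hcu : Continuous u := continuous_iff_continuousAt.2 fun x => (hu x).continuousAt
  have hcu₁ : Continuous u₁ := continuous_iff_continuousAt.2 fun x => (hu₁ x).continuousAt
  have hcu₂ : Continuous u₂ := continuous_iff_continuousAt.2 fun x => (hu₂ x).continuousAt
  have hrpow : ∀ s : ℝ, ContinuousOn (fun x => u x ^ s) (Icc (-1) 1) := fun s =>
    hcu.continuousOn.rpow_const fun x hx => .inl (hpos x hx).ne'
  have := hrpow a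
  have := hrpow (a - 1)
  have := hrpow (a - 2)
  have hflux : ContinuousOn (fun x => (1 - x ^ 2) *
      (2 * u x ^ a * u₁ x * u₂ x + c * u x ^ (a - 1) * u₁ x ^ 3)) (Icc (-1) 1) := by fun_prop
  have hflux' : ContinuousOn (fun x =>
      -(2 * x) * (2 * u x ^ a * u₁ x * u₂ x + c * u x ^ (a - 1) * u₁ x ^ 3) +
        (1 - x ^ 2) * (2 * (a * u x ^ (a - 1) * u₁ x * (u₁ x * u₂ x) +
            u x ^ a * (u₂ x ^ 2 + u₁ x * u₃ x)) +
          c * ((a - 1) * u x ^ (a - 2) * u₁ x * u₁ x ^ 3 +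
            u x ^ (a - 1) * (3 * u₁ x ^ 2 * u₂ x)))) (Icc (-1) 1) := by fun_prop
  have hibp := integral_one_sub_sq_mul_deriv_sub_nuMeas (d := d) hflux hflux' fun x hx =>
    hasDerivAt_dissipation_flux (hpos x (Ioo_subset_Icc_self hx)) (hu x) (hu₁ x) (hu₂ x)
  rw [fisherInfo, ← integral_const_mul, ← sub_nonpos, sub_neg_eq_add, ← integral_add
    (integrable_nuMeas_of_continuousOn (by fun_prop))
    (integrable_nuMeas_of_continuousOn (by fun_prop)), ← hibp]
  refine integral_mono_ae (integrable_nuMeas_of_continuousOn (by fun_prop))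
    (integrable_nuMeas_of_continuousOn
      (.sub (.mul (by fun_prop) hflux') (.mul (by fun_prop) hflux)))
    (ae_mem_Icc_nuMeas.mono fun x hx => ?_)
  beta_reduce
  rw [← dissipation_integrand_eq (hpos x hx) hcd, le_add_iff_nonneg_right]
  exact mul_nonneg (mul_nonneg (rpow_nonneg (hpos x hx).le a) (sq_nonneg _))
    (dissipation_quadraticForm_nonneg (Nat.one_le_cast.2 NeZero.one_le) ha ha0 hc _ _)

lemma hasDerivAt_fisherInfo_heatFlow
    (hh : ∀ k, h k ∈ (ultrasphericalOp d).eigenspace (-ultrasphericalEigenvalue d k)) (a : ℝ)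
    {t : ℝ} (ht : ∀ x ∈ Icc (-1 : ℝ) 1, 0 < (heatFlow d h t).eval x) :
    HasDerivAt
      (fun r => fisherInfo d a (heatFlow d h r).eval (derivative (heatFlow d h r)).eval)
      (∫ x, (a * (heatFlow d h t).eval x ^ (a - 1) *
          (ultrasphericalOp d (heatFlow d h t)).eval x *
          (derivative (heatFlow d h t)).eval x ^ 2 +
        (heatFlow d h t).eval x ^ a * (2 * (derivative (heatFlow d h t)).eval x *
          (derivative (ultrasphericalOp d (heatFlow d h t))).eval x)) *
        (1 - x ^ 2) ∂(nuMeas d)) t := by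
  have hpos : ∀ᶠ r in 𝓝 t, ∀ x ∈ Icc (-1 : ℝ) 1, 0 < (heatFlow d h r).eval x :=
    eventually_forall_eval_heatFlow_mem isOpen_Ioi ht
  refine hasDerivAt_integral_nuMeas (F' := fun r x => (a * (heatFlow d h r).eval x ^ (a - 1) *
      (ultrasphericalOp d (heatFlow d h r)).eval x * (derivative (heatFlow d h r)).eval x ^ 2 +
        (heatFlow d h r).eval x ^ a * (2 * (derivative (heatFlow d h r)).eval x *
          (derivative (ultrasphericalOp d (heatFlow d h r))).eval x)) * (1 - x ^ 2))
    (hpos.mono fun r hr => ?_) (fun x hx => ?_) (hpos.mono fun r hr x hx => ?_)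
  · exact (((heatFlow d h r).continuous.continuousOn.rpow_const
      fun x hx => .inl (hr x hx).ne').mul (by fun_prop)).mul (by fun_prop)
  · have hv := continuous_eval_map_heatFlow (d := d) (h := h) 1
    have hv' := continuous_eval_map_heatFlow (d := d) (h := h) derivative
    have hL := continuous_eval_map_heatFlow (d := d) (h := h) (ultrasphericalOp d)
    have hL' := continuous_eval_map_heatFlow (d := d) (h := h) (derivative ∘ₗ ultrasphericalOp d)
    have hrpow : ∀ s : ℝ, ContinuousAt (fun z : ℝ × ℝ => (heatFlow d h z.1).eval z.2 ^ s) (t, x) :=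
      fun s => hv.continuousAt.rpow_const (.inl (ht x hx).ne')
    exact ((((hrpow (a - 1)).const_mul a |>.mul hL.continuousAt).mul (hv'.continuousAt.pow 2)).add
      ((hrpow a).mul ((hv'.continuousAt.const_mul 2).mul hL'.continuousAt))).mul
      (by fun_prop)
  · have hv := (hasDerivAt_map_heatFlow hh (leval x) r).rpow_const (p := a) (.inl (hr x hx).ne')
    have hv' := (hasDerivAt_map_heatFlow hh (leval x ∘ₗ derivative) r).pow 2
    refine ((hv.mul hv').mul_const (1 - x ^ 2)).congr_deriv ?_
    simp only [Pi.pow_apply, LinearMap.comp_apply, leval_apply]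
    push_cast
    ring

lemma monotoneOn_integral_rpow_heatFlow_sub_fisherInfo
    (hh : ∀ k, h k ∈ (ultrasphericalOp d).eigenspace (-ultrasphericalEigenvalue d k)) {q : ℝ}
    (hq1 : 1 ≤ q) (hq2 : q ≤ 2)
    (hpos : ∀ t ∈ Ici (0 : ℝ), ∀ x ∈ Icc (-1 : ℝ) 1, 0 < (heatFlow d h t).eval x) :
    MonotoneOn (fun t => ∫ x, (heatFlow d h t).eval x ^ q ∂(nuMeas d) - q * (q - 1) / (2 * d) *
      fisherInfo d (q - 2) (heatFlow d h t).eval (derivative (heatFlow d h t)).eval) (Ici 0) := by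
  have hentropy : ∀ t ∈ Ici (0 : ℝ), HasDerivAt
      (fun t => ∫ x, (heatFlow d h t).eval x ^ q ∂(nuMeas d)) (-(q * (q - 1) *
        fisherInfo d (q - 2) (heatFlow d h t).eval (derivative (heatFlow d h t)).eval)) t := by
    intro t ht
    refine (hasDerivAt_integral_comp_heatFlow hh isOpen_Ioi (φ := fun y => y ^ q)
      (φ' := fun y => q * y ^ (q - 1)) (φ'' := fun y => q * (q - 1) * y ^ (q - 2))
      (fun y hy => hasDerivAt_rpow_const (.inl hy.ne')) (fun y hy => ?_) ?_ (hpos t ht)).congr_deriv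
      ?_
    · refine ((hasDerivAt_rpow_const (.inl hy.ne')).const_mul q).congr_deriv ?_
      rw [mul_assoc, show q - 1 - 1 = q - 2 by ring]
    · exact (continuousOn_id.rpow_const fun y hy => .inl hy.ne').const_mul _
    · rw [fisherInfo, ← integral_const_mul]
      simp only [mul_assoc]
  have hderiv := fun t (ht : t ∈ Ici (0 : ℝ)) => (hentropy t ht).sub
    ((hasDerivAt_fisherInfo_heatFlow hh (q - 2) (hpos t ht)).const_mul (q * (q - 1) / (2 * d)))
  refine monotoneOn_of_hasDerivWithinAt_nonneg (convex_Ici 0)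
    (fun t ht => (hderiv t ht).continuousAt.continuousWithinAt)
    (fun t ht => (hderiv t (interior_subset ht)).hasDerivWithinAt) fun t ht => ?_
  have hdiss := fisherInfo_dissipation (d := d) (a := q - 2) (by linarith) (by linarith)
    (fun x => (heatFlow d h t).hasDerivAt x) (fun x => (derivative (heatFlow d h t)).hasDerivAt x)
    (fun x => (derivative (derivative (heatFlow d h t))).hasDerivAt x) (by fun_prop)
    (hpos t (interior_subset ht))
  simp only [← eval_ultrasphericalOp, ← eval_derivative_ultrasphericalOp] at hdiss
  have hK : 0 ≤ q * (q - 1) / (2 * d) := by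
    have : 0 ≤ q - 1 := sub_nonneg.2 hq1
    positivity
  have hKd : q * (q - 1) / (2 * d) * (2 * d) = q * (q - 1) :=
    div_mul_cancel₀ _ (by simp [NeZero.ne d])
  exact sub_nonneg.2 <| (mul_le_mul_of_nonneg_left hdiss hK).trans_eq <| by
    rw [mul_neg, ← mul_assoc, hKd]

lemma exists_heatFlow_zero_eq (P : ℝ[X]) : ∃ h : ℕ →₀ ℝ[X],
    (∀ k, h k ∈ (ultrasphericalOp d).eigenspace (-ultrasphericalEigenvalue d k)) ∧
      heatFlow d h 0 = P := by
  have hP : P ∈ ⨆ k, (ultrasphericalOp d).eigenspace (-ultrasphericalEigenvalue d k) :=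
    iSup_eigenspace_ultrasphericalOp (d := d) ▸ Submodule.mem_top
  obtain ⟨h, hh, hsum⟩ := (Submodule.mem_iSup_iff_exists_finsupp _ _).1 hP
  exact ⟨h, hh, heatFlow_zero.trans hsum⟩

end HeatFlow

lemma integral_deriv_sq_mul_one_sub_sq_nuMeas {f f' : ℝ → ℝ}
    (hf : ∀ x ∈ Icc (-1 : ℝ) 1, HasDerivWithinAt f (f' x) (Icc (-1) 1) x) :
    ∫ x, deriv f x ^ 2 * (1 - x ^ 2) ∂(nuMeas d) =
      ∫ x, f' x ^ 2 * (1 - x ^ 2) ∂(nuMeas d) :=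
  integral_congr_ae <| ae_mem_Ioo_nuMeas.mono fun x hx => by
    simp only [((hf x (Ioo_subset_Icc_self hx)).hasDerivAt (Icc_mem_nhds hx.1 hx.2)).deriv]

lemma exists_polynomial_derivative_eq {K : Type*} [Field K] [CharZero K] (p : K[X]) :
    ∃ q : K[X], derivative q = p := by
  induction p using Polynomial.induction_on' with
  | add p q hp hq =>
    obtain ⟨P, rfl⟩ := hp
    obtain ⟨Q, rfl⟩ := hq
    exact ⟨P + Q, derivative_add⟩
  | monomial n a =>
    refine ⟨monomial (n + 1) (a / (n + 1)), ?_⟩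
    rw [derivative_monomial_succ, div_mul_cancel₀ _ n.cast_add_one_ne_zero]

/-- Integrate a polynomial approximation of the derivative. -/
lemma exists_polynomial_near_of_hasDerivWithinAt {a b : ℝ} (hab : a ≤ b) {g g' : ℝ → ℝ}
    (hg : ∀ x ∈ Icc a b, HasDerivWithinAt g (g' x) (Icc a b) x)
    (hg' : ContinuousOn g' (Icc a b)) {ε : ℝ} (hε : 0 < ε) :
    ∃ P : ℝ[X], ∀ x ∈ Icc a b, |P.eval x - g x| < ε ∧ |(derivative P).eval x - g' x| < ε := by
  obtain ⟨δ, hδ, hδε⟩ : ∃ δ, 0 < δ ∧ max 1 (b - a) * δ < ε :=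
    exists_pos_mul_lt hε (max 1 (b - a))
  obtain ⟨R, hR⟩ := exists_polynomial_near_of_continuousOn a b g' hg' δ hδ
  obtain ⟨Q, rfl⟩ := exists_polynomial_derivative_eq R
  refine ⟨Q + C (g a - Q.eval a), fun x hx => ⟨?_, ?_⟩⟩
  · have hmvt : |Q.eval x - g x - (Q.eval a - g a)| ≤ δ * |x - a| :=
      Convex.norm_image_sub_le_of_norm_hasDerivWithin_le
        (fun y hy => (Q.hasDerivAt y).hasDerivWithinAt.sub (hg y hy))
        (fun y hy => (hR y hy).le) (convex_Icc a b) (left_mem_Icc.2 hab) hx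
    calc |(Q + C (g a - Q.eval a)).eval x - g x| = |Q.eval x - g x - (Q.eval a - g a)| := by
          rw [eval_add, eval_C]; ring_nf
      _ ≤ δ * |x - a| := hmvt
      _ ≤ max 1 (b - a) * δ := by
          rw [mul_comm, abs_of_nonneg (sub_nonneg.2 hx.1)]
          gcongr
          exact le_max_of_le_right (by linarith [hx.2])
      _ < ε := hδε
  · rw [derivative_add, derivative_C, add_zero]
    exact (hR x hx).trans ((le_mul_of_one_le_left hδ.le (le_max_left _ _)).trans_lt hδε)

lemma exists_polynomial_tendstoUniformlyOn_of_hasDerivWithinAt {a b : ℝ} (hab : a ≤ b)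
    {g g' : ℝ → ℝ} (hg : ∀ x ∈ Icc a b, HasDerivWithinAt g (g' x) (Icc a b) x)
    (hg' : ContinuousOn g' (Icc a b)) :
    ∃ P : ℕ → ℝ[X], TendstoUniformlyOn (fun n => (P n).eval) g atTop (Icc a b) ∧
      TendstoUniformlyOn (fun n => (derivative (P n)).eval) g' atTop (Icc a b) := by
  choose P hP using fun n : ℕ =>
    exists_polynomial_near_of_hasDerivWithinAt hab hg hg' (Nat.one_div_pos_of_nat (n := n))
  simp only [Metric.tendstoUniformlyOn_iff, Real.dist_eq, abs_sub_comm (g _), abs_sub_comm (g' _)]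
  refine ⟨P, fun ε hε => ?_, fun ε hε => ?_⟩ <;>
    filter_upwards [tendsto_one_div_add_atTop_nhds_zero_nat.eventually_lt_const hε] with n hn x hx
  exacts [(hP n x hx).1.trans hn, (hP n x hx).2.trans hn]

lemma tendsto_uncurry_of_tendstoUniformlyOn {ι X Y : Type*} [TopologicalSpace X] [UniformSpace Y]
    {l : Filter ι} {F : ι → X → Y} {g : X → Y} {s : Set X} {x : X}
    (hF : TendstoUniformlyOn F g l s) (hg : ContinuousWithinAt g s x) :
    Tendsto (Function.uncurry F) (l ×ˢ 𝓝[s] x) (𝓝 (g x)) :=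
  tendsto_comp_of_locally_uniform_limit_within (F := fun z => F z.1) hg tendsto_snd
    fun u hu => ⟨s, self_mem_nhdsWithin, tendsto_fst.eventually (hF u hu)⟩

section Interpolation

variable [NeZero d]

lemma integral_rpow_sub_rpow_integral_le_fisherInfo_polynomial {q : ℝ} (hq1 : 1 ≤ q) (hq2 : q ≤ 2)
    {P : ℝ[X]} (hP : ∀ x ∈ Icc (-1 : ℝ) 1, 0 < P.eval x) :
    ∫ x, P.eval x ^ q ∂(nuMeas d) - (∫ x, P.eval x ∂(nuMeas d)) ^ q ≤
      q * (q - 1) / (2 * d) * fisherInfo d (q - 2) P.eval (derivative P).eval := by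
  obtain ⟨h, hh, rfl⟩ := exists_heatFlow_zero_eq (d := d) P
  obtain ⟨x₀, hx₀, hmin⟩ := isCompact_Icc.exists_isMinOn
    (nonempty_Icc.2 (by norm_num : (-1 : ℝ) ≤ 1))
    (heatFlow d h 0).continuous.continuousOn
  have hpos : ∀ t ∈ Ici (0 : ℝ), ∀ x ∈ Icc (-1 : ℝ) 1, 0 < (heatFlow d h t).eval x :=
    fun t ht x hx => (hP x₀ hx₀).trans_le (le_eval_heatFlow hh hmin ht x hx)
  have hlim := tendsto_integral_nuMeas (d := d) (l := atTop)
    (F := fun t x => (heatFlow d h t).eval x ^ q)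
    (.of_forall fun t => (heatFlow d h t).continuous.continuousOn.rpow_const
      fun _ _ => .inr (by linarith))
    fun x _ => ((tendsto_eval_heatFlow_atTop hh x).mono_left
      (Filter.prod_mono_right _ nhdsWithin_le_nhds)).rpow_const (p := q) (.inr (by linarith))
  rw [integral_const, probReal_univ, one_smul] at hlim
  rw [sub_le_comm]
  refine ge_of_tendsto hlim ((eventually_ge_atTop 0).mono fun t ht => ?_)
  refine (monotoneOn_integral_rpow_heatFlow_sub_fisherInfo hh hq1 hq2 hpos self_mem_Ici ht
    ht).trans (sub_le_self _ (mul_nonneg ?_ (fisherInfo_nonneg fun x hx => (hpos t ht x hx).le)))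
  have : 0 ≤ q - 1 := sub_nonneg.2 hq1
  positivity

lemma integral_rpow_sub_rpow_integral_le_fisherInfo {q : ℝ} (hq1 : 1 ≤ q) (hq2 : q ≤ 2)
    {g g' : ℝ → ℝ} (hg : ∀ x ∈ Icc (-1 : ℝ) 1, HasDerivWithinAt g (g' x) (Icc (-1) 1) x)
    (hg' : ContinuousOn g' (Icc (-1) 1)) (hpos : ∀ x ∈ Icc (-1 : ℝ) 1, 0 < g x) :
    ∫ x, g x ^ q ∂(nuMeas d) - (∫ x, g x ∂(nuMeas d)) ^ q ≤
      q * (q - 1) / (2 * d) * fisherInfo d (q - 2) g g' := by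
  have hgc : ContinuousOn g (Icc (-1) 1) := fun x hx => (hg x hx).continuousWithinAt
  obtain ⟨P, hP, hP'⟩ :=
    exists_polynomial_tendstoUniformlyOn_of_hasDerivWithinAt (by norm_num) hg hg'
  have hlim := fun x hx => tendsto_uncurry_of_tendstoUniformlyOn hP (hgc x hx)
  have hlim' := fun x hx => tendsto_uncurry_of_tendstoUniformlyOn hP' (hg' x hx)
  have hPpos : ∀ᶠ n in atTop, ∀ x ∈ Icc (-1 : ℝ) 1, 0 < (P n).eval x := by
    obtain ⟨x₀, hx₀, hmin⟩ :=
      isCompact_Icc.exists_isMinOn (nonempty_Icc.2 (by norm_num : (-1 : ℝ) ≤ 1)) hgc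
    filter_upwards [Metric.tendstoUniformlyOn_iff.1 hP _ (hpos x₀ hx₀)] with n hn x hx
    linarith [isMinOn_iff.1 hmin x hx, (abs_lt.1 (hn x hx)).2]
  have hrpow : ∀ s : ℝ, ∀ᶠ n in atTop, ContinuousOn (fun x => (P n).eval x ^ s) (Icc (-1) 1) :=
    fun s => hPpos.mono fun n hn =>
      (P n).continuous.continuousOn.rpow_const fun x hx => .inl (hn x hx).ne'
  have hmean := tendsto_integral_nuMeas (d := d) (.of_forall fun n => (P n).continuous.continuousOn)
    hlim
  have hentropy := tendsto_integral_nuMeas (d := d) (hrpow q) fun x hx =>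
    (hlim x hx).rpow_const (.inl (hpos x hx).ne')
  have hfisher := tendsto_integral_nuMeas (d := d)
    (F := fun n x => (P n).eval x ^ (q - 2) * (derivative (P n)).eval x ^ 2 * (1 - x ^ 2))
    ((hrpow (q - 2)).mono fun n hn => by fun_prop) fun x hx =>
    (((hlim x hx).rpow_const (.inl (hpos x hx).ne')).mul ((hlim' x hx).pow 2)).mul
      (((by fun_prop : Continuous fun x : ℝ => 1 - x ^ 2).tendsto x).comp
        (tendsto_snd.mono_right nhdsWithin_le_nhds))
  exact le_of_tendsto_of_tendsto (hentropy.sub (hmean.rpow_const (.inr (by linarith))))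
    (hfisher.const_mul _) (hPpos.mono fun n hn =>
      integral_rpow_sub_rpow_integral_le_fisherInfo_polynomial hq1 hq2 hn)

lemma rpow_half_rpow_mul_rpow_sq {b p : ℝ} (hb : 0 < b) (hp : p ≠ 0) :
    (b ^ (p / 2)) ^ (2 / p - 2) * (b ^ (p / 2 - 1)) ^ 2 = b⁻¹ := by
  rw [← rpow_mul hb.le, ← rpow_mul_natCast hb.le, ← rpow_add hb, ← rpow_neg_one]
  congr 1
  field_simp
  ring

lemma fisherInfo_rpow_half_le {p ε : ℝ} (hp : 0 < p) (hε : 0 < ε) {f f' : ℝ → ℝ}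
    (hf : ContinuousOn f (Icc (-1) 1)) (hf' : ContinuousOn f' (Icc (-1) 1)) :
    fisherInfo d (2 / p - 2) (fun x => (f x ^ 2 + ε) ^ (p / 2))
        (fun x => 2 * f x * f' x * (p / 2) * (f x ^ 2 + ε) ^ (p / 2 - 1)) ≤
      p ^ 2 * ∫ x, f' x ^ 2 * (1 - x ^ 2) ∂(nuMeas d) := by
  have hpos : ∀ x, 0 < f x ^ 2 + ε := fun x => by positivity
  have hintegrand : ∀ x, ((f x ^ 2 + ε) ^ (p / 2)) ^ (2 / p - 2) *
      (2 * f x * f' x * (p / 2) * (f x ^ 2 + ε) ^ (p / 2 - 1)) ^ 2 * (1 - x ^ 2) =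
      p ^ 2 * (f x ^ 2 / (f x ^ 2 + ε) * (f' x ^ 2 * (1 - x ^ 2))) := fun x => by
    rw [div_eq_mul_inv (f x ^ 2), ← rpow_half_rpow_mul_rpow_sq (hpos x) hp.ne']
    ring
  simp only [fisherInfo, hintegrand, integral_const_mul]
  refine mul_le_mul_of_nonneg_left (integral_mono_ae (integrable_nuMeas_of_continuousOn ?_)
    (integrable_nuMeas_of_continuousOn (by fun_prop)) (ae_mem_Icc_nuMeas.mono fun x hx => ?_))
    (sq_nonneg p)
  · exact ((hf.pow 2).div (by fun_prop) fun x _ => (hpos x).ne').mul (by fun_prop)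
  · exact mul_le_of_le_one_left (mul_nonneg (sq_nonneg _) (one_sub_sq_nonneg hx))
      (div_le_one_of_le₀ (by linarith) (hpos x).le)

lemma integral_sq_add_sub_rpow_integral_le {p ε : ℝ} (hp1 : 1 ≤ p) (hp2 : p ≤ 2) (hε : 0 < ε)
    {f f' : ℝ → ℝ} (hf : ∀ x ∈ Icc (-1 : ℝ) 1, HasDerivWithinAt f (f' x) (Icc (-1) 1) x)
    (hf' : ContinuousOn f' (Icc (-1) 1)) :
    ∫ x, (f x ^ 2 + ε) ∂(nuMeas d) - (∫ x, (f x ^ 2 + ε) ^ (p / 2) ∂(nuMeas d)) ^ (2 / p) ≤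
      (2 - p) / d * ∫ x, f' x ^ 2 * (1 - x ^ 2) ∂(nuMeas d) := by
  have hp : 0 < p := by linarith
  have hq1 : 1 ≤ 2 / p := (one_le_div hp).2 hp2
  have hfc : ContinuousOn f (Icc (-1) 1) := fun x hx => (hf x hx).continuousWithinAt
  have hpos : ∀ x, 0 < f x ^ 2 + ε := fun x => by positivity
  have hroot : ∀ x, ((f x ^ 2 + ε) ^ (p / 2)) ^ (2 / p) = f x ^ 2 + ε := fun x => by
    rw [← inv_div p 2, rpow_rpow_inv (hpos x).le (by positivity)]
  have hrpow : ContinuousOn (fun x => (f x ^ 2 + ε) ^ (p / 2 - 1)) (Icc (-1) 1) :=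
    .rpow_const (by fun_prop) fun x _ => .inl (hpos x).ne'
  have hinterp := integral_rpow_sub_rpow_integral_le_fisherInfo (d := d) hq1
    ((div_le_iff₀ hp).2 (by linarith)) (g := fun x => (f x ^ 2 + ε) ^ (p / 2))
    (g' := fun x => 2 * f x * f' x * (p / 2) * (f x ^ 2 + ε) ^ (p / 2 - 1))
    (fun x hx => by
      simpa using (((hf x hx).pow 2).add_const ε).rpow_const (p := p / 2) (.inl (hpos x).ne'))
    (by fun_prop) (fun x _ => rpow_pos_of_pos (hpos x) _)
  simp only [hroot] at hinterp
  calc _ ≤ _ := hinterp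
    _ ≤ 2 / p * (2 / p - 1) / (2 * d) * (p ^ 2 * ∫ x, f' x ^ 2 * (1 - x ^ 2) ∂(nuMeas d)) := by
      have : 0 ≤ 2 / p - 1 := sub_nonneg.2 hq1
      exact mul_le_mul_of_nonneg_left (fisherInfo_rpow_half_le hp hε hfc hf') (by positivity)
    _ = _ := by field_simp

lemma integral_sq_sub_rpow_integral_abs_rpow_le {p : ℝ} (hp1 : 1 ≤ p) (hp2 : p ≤ 2)
    {f f' : ℝ → ℝ} (hf : ∀ x ∈ Icc (-1 : ℝ) 1, HasDerivWithinAt f (f' x) (Icc (-1) 1) x)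
    (hf' : ContinuousOn f' (Icc (-1) 1)) :
    ∫ x, f x ^ 2 ∂(nuMeas d) - (∫ x, |f x| ^ p ∂(nuMeas d)) ^ (2 / p) ≤
      (2 - p) / d * ∫ x, f' x ^ 2 * (1 - x ^ 2) ∂(nuMeas d) := by
  have hfc : ContinuousOn f (Icc (-1) 1) := fun x hx => (hf x hx).continuousWithinAt
  have hsq : ∀ x ∈ Icc (-1 : ℝ) 1, Tendsto (Function.uncurry fun ε x => f x ^ 2 + ε)
      (𝓝[>] 0 ×ˢ 𝓝[Icc (-1) 1] x) (𝓝 (f x ^ 2)) := fun x hx => by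
    simpa [Function.uncurry_def] using (((hfc x hx).tendsto.comp tendsto_snd).pow 2).add
      (tendsto_fst.mono_right (nhdsWithin_le_nhds (a := (0 : ℝ)) (s := Ioi 0)))
  have hentropy := tendsto_integral_nuMeas (d := d) (.of_forall fun ε => by fun_prop) hsq
  have hmean := tendsto_integral_nuMeas (d := d) (F := fun ε x => (f x ^ 2 + ε) ^ (p / 2))
    (G := fun x => |f x| ^ p)
    (.of_forall fun ε => .rpow_const (by fun_prop) fun x _ => .inr (by linarith)) fun x hx => by
      have h := (hsq x hx).rpow_const (p := p / 2) (.inr (by linarith))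
      rwa [← sq_abs, ← rpow_natCast_mul (abs_nonneg _), Nat.cast_ofNat,
        mul_div_cancel₀ p two_ne_zero] at h
  exact le_of_tendsto (hentropy.sub (hmean.rpow_const (.inr (by positivity))))
    (eventually_mem_nhdsWithin.mono fun ε hε =>
      integral_sq_add_sub_rpow_integral_le hp1 hp2 hε hf hf')

end Interpolation

theorem ultraspherical_subcritical (d : ℕ) (hd : 1 ≤ d) (p : ℝ) (hp1 : 1 ≤ p) (hp2 : p < 2)
    (f : ℝ → ℝ) (hf : ContDiffOn ℝ 1 f (Set.Icc (-1 : ℝ) 1)) :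
    ∫ x, (deriv f x) ^ 2 * (1 - x ^ 2) ∂(nuMeas d) ≥
      d * (((∫ x, |f x| ^ (2 : ℝ) ∂(nuMeas d)) -
        (∫ x, |f x| ^ p ∂(nuMeas d)) ^ (2 / p)) / (2 - p)) := by
  have : NeZero d := .of_pos hd
  have hf' : ∀ x ∈ Icc (-1 : ℝ) 1,
      HasDerivWithinAt f (derivWithin f (Icc (-1) 1) x) (Icc (-1) 1) x := fun x hx =>
    (hf.differentiableOn one_ne_zero x hx).hasDerivWithinAt
  have hinterp := integral_sq_sub_rpow_integral_abs_rpow_le (d := d) hp1 hp2.le hf'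
    (hf.continuousOn_derivWithin (uniqueDiffOn_Icc (by norm_num)) le_rfl)
  have hd₀ : (0 : ℝ) < d := Nat.cast_pos.2 hd
  simp only [rpow_two, sq_abs, integral_deriv_sq_mul_one_sub_sq_nuMeas hf']
  rw [ge_iff_le, ← mul_div_assoc, div_le_iff₀ (sub_pos.2 hp2), ← le_div_iff₀' hd₀]
  exact hinterp.trans_eq (by ring)
end
end
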